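/- Let C ∈ RH∞^{n×n} be real-rational and γ > 0. Then [P,C] is stable for every strictly negative imaginary (SNI) P ∈ RH∞^{n×n} satisfying P(∞) ≥ 0 and P(0) ≤ γI if and only if C is negative imaginary (NI) and C(0) < (1/γ)I. -/

import Mathlib

open Matrix Polynomial Filter Topology
open scoped ComplexOrder

noncomputable section

namespace NIControl

/-- Evaluate a real-rational function at a complex point (junk value at poles). -/
def evalC (f : RatFunc ℝ) (s : ℂ) : ℂ :=
  f.eval (algebraMap ℝ ℂ) s

/-- `s` is a pole of the real-rational function `f`
(the reduced denominator vanishes at `s`). -/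
def IsPoleAt (f : RatFunc ℝ) (s : ℂ) : Prop :=
  f.denom.eval₂ (algebraMap ℝ ℂ) s = 0

variable {n : ℕ}

/-- Pointwise evaluation of a real-rational transfer matrix at a complex point. -/
def evalM (G : Matrix (Fin n) (Fin n) (RatFunc ℝ)) (s : ℂ) : Matrix (Fin n) (Fin n) ℂ :=
  Matrix.of fun i j => evalC (G i j) s

/-- Pointwise evaluation of a real-rational transfer matrix at a real point. -/
def evalR (G : Matrix (Fin n) (Fin n) (RatFunc ℝ)) (x : ℝ) : Matrix (Fin n) (Fin n) ℝ :=
  Matrix.of fun i j => (G i j).eval (RingHom.id ℝ) x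

/-- Value at `s = ∞` of a proper real-rational function. -/
def atInfinity (f : RatFunc ℝ) : ℝ :=
  if f.num.degree = f.denom.degree then f.num.leadingCoeff / f.denom.leadingCoeff else 0

/-- The instantaneous gain `G(∞)` of a proper real-rational transfer matrix. -/
def evalInf (G : Matrix (Fin n) (Fin n) (RatFunc ℝ)) : Matrix (Fin n) (Fin n) ℝ :=
  Matrix.of fun i j => atInfinity (G i j)

/-- The matrix `G` has a pole at `s`. -/
def HasPole (G : Matrix (Fin n) (Fin n) (RatFunc ℝ)) (s : ℂ) : Prop :=
  ∃ i j, IsPoleAt (G i j) s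

/-- All entries of `G` are proper rational functions. -/
def Proper (G : Matrix (Fin n) (Fin n) (RatFunc ℝ)) : Prop :=
  ∀ i j, (G i j).num.degree ≤ (G i j).denom.degree

/-- All entries of `G` are strictly proper rational functions. -/
def StrictlyProper (G : Matrix (Fin n) (Fin n) (RatFunc ℝ)) : Prop :=
  ∀ i j, (G i j).num.degree < (G i j).denom.degree

/-- The pole of `G` at the origin (if any) is at most simple. -/
def NoDoubleOriginPole (G : Matrix (Fin n) (Fin n) (RatFunc ℝ)) : Prop :=
  ∀ i j, (G i j).denom.rootMultiplicity 0 ≤ 1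

/-- Membership in `RH∞`: proper and no poles in the closed right-half complex plane. -/
def MemRHinf {m : Type*} [Fintype m] (G : Matrix m m (RatFunc ℝ)) : Prop :=
  (∀ i j, (G i j).num.degree ≤ (G i j).denom.degree) ∧
  ∀ s : ℂ, 0 ≤ s.re → ∀ i j, ¬ IsPoleAt (G i j) s

/-- The point `jω` on the imaginary axis. -/
def jw (ω : ℝ) : ℂ := Complex.I * (ω : ℂ)

/-- The negative-imaginary frequency kernel `j (M − M*)`. -/
def niKer (M : Matrix (Fin n) (Fin n) ℂ) : Matrix (Fin n) (Fin n) ℂ :=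
  Complex.I • (M - Mᴴ)

/-- Negative imaginary (NI) real-rational transfer matrix. -/
def IsNI (G : Matrix (Fin n) (Fin n) (RatFunc ℝ)) : Prop :=
  Proper G ∧
  (∀ s : ℂ, 0 < s.re → ¬ HasPole G s) ∧
  (∀ ω : ℝ, 0 < ω → ¬ HasPole G (jw ω) → (niKer (evalM G (jw ω))).PosSemidef) ∧
  (∀ ω : ℝ, 0 < ω → HasPole G (jw ω) →
    ∃ R : Matrix (Fin n) (Fin n) ℂ, R.PosSemidef ∧
      Tendsto (fun s : ℂ => (s - jw ω) • Complex.I • evalM G s) (𝓝[≠] jw ω) (𝓝 R)) ∧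
  (HasPole G 0 →
    (∀ k : ℕ, 3 ≤ k → Tendsto (fun s : ℂ => s ^ k • evalM G s) (𝓝[≠] 0) (𝓝 0)) ∧
    ∃ R : Matrix (Fin n) (Fin n) ℂ, R.PosSemidef ∧
      Tendsto (fun s : ℂ => s ^ 2 • evalM G s) (𝓝[≠] 0) (𝓝 R))

/-- Strictly negative imaginary (SNI) real-rational transfer matrix. -/
def IsSNI (G : Matrix (Fin n) (Fin n) (RatFunc ℝ)) : Prop :=
  MemRHinf G ∧ ∀ ω : ℝ, 0 < ω → (niKer (evalM G (jw ω))).PosDef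

/-- Positive real (passive) real-rational transfer matrix. -/
def IsPositiveReal (G : Matrix (Fin n) (Fin n) (RatFunc ℝ)) : Prop :=
  MemRHinf G ∧ ∀ ω : ℝ, 0 ≤ ω → (evalM G (jw ω) + (evalM G (jw ω))ᴴ).PosSemidef

/-- Output strictly passive real-rational transfer matrix. -/
def IsOSP (G : Matrix (Fin n) (Fin n) (RatFunc ℝ)) : Prop :=
  MemRHinf G ∧ ∃ ε : ℝ, 0 < ε ∧ ∀ ω : ℝ, 0 ≤ ω →
    (evalM G (jw ω) + (evalM G (jw ω))ᴴ -
      (ε : ℂ) • ((evalM G (jw ω))ᴴ * evalM G (jw ω))).PosSemidef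

/-- Stability of the positive feedback interconnection `[P, C]`:
`[I; C] (I − P C)⁻¹ [I, P] ∈ RH∞`. -/
def FeedbackStable (P C : Matrix (Fin n) (Fin n) (RatFunc ℝ)) : Prop :=
  ((1 : Matrix (Fin n) (Fin n) (RatFunc ℝ)) - P * C).det ≠ 0 ∧
  MemRHinf (Matrix.fromBlocks
    (1 - P * C)⁻¹ ((1 - P * C)⁻¹ * P)
    (C * (1 - P * C)⁻¹) (C * (1 - P * C)⁻¹ * P))

/-- All eigenvalues of the complex matrix `M` are real and less than `c`. -/
def eigsRealAndLT (M : Matrix (Fin n) (Fin n) ℂ) (c : ℝ) : Prop :=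
  ∀ μ ∈ spectrum ℂ M, μ.im = 0 ∧ μ.re < c

/-- The (real) eigenvalues of the real matrix `M` are all real and its largest
eigenvalue is less than `c`. -/
def maxEigLT (M : Matrix (Fin n) (Fin n) ℝ) (c : ℝ) : Prop :=
  eigsRealAndLT (M.map (Complex.ofReal)) c

/-- Loewner order `A ≤ B` on real matrices. -/
def LoewnerLE (A B : Matrix (Fin n) (Fin n) ℝ) : Prop := (B - A).PosSemidef

/-- Strict Loewner order `A < B` on real matrices. -/
def LoewnerLT (A B : Matrix (Fin n) (Fin n) ℝ) : Prop := (B - A).PosDef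

/-!
In the disc coordinate `z ↦ (1 + z) / (1 - z)` the stable proper rational functions become
continuous functions on the closed unit disc, holomorphic inside, and `[P, C]` is stable if and
only if `det (1 - P C)` has no zero on the closed disc.

*Sufficiency.* For `C` negative imaginary with `C(0) < γ⁻¹ I`, this determinant does not vanish on
the unit circle: at `ω > 0` because the quadratic forms of `P` and `C` have imaginary parts of
opposite sign along a solution of `P C x = x`, and at `0` and `∞` because of the bounds on the
static gains, the gain at `∞` being dominated by the gain at `0`. The same holds for `r P` with
`r ∈ [0, 1]`, so by the maximum principle no zero can enter the disc as `r` goes from `0` to `1`.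

*Necessity.* If `Im (x* C(jω₀) x) > 0`, set `y = C(jω₀) x`. A small multiple of a fixed strictly
negative imaginary matrix plus a lightly damped, weakly coupled resonance at `ω₀` interpolates
`P(jω₀) y = x` within the gain bounds, so that `det (1 - P C)` vanishes at `jω₀`. If
`C(0) v = l v` with `l ≥ γ⁻¹`, a `P` with `P(0) = l⁻¹ I` gives a zero at the origin.
-/

section RationalFunctions

/-- A real polynomial without zeros in the closed right half plane, i.e. an admissible
denominator of a stable transfer function. -/
def IsHurwitz (q : ℝ[X]) : Prop :=
  ∀ s : ℂ, 0 ≤ s.re → aeval s q ≠ 0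

lemma IsHurwitz.ne_zero {q : ℝ[X]} (hq : IsHurwitz q) : q ≠ 0 := by
  rintro rfl
  exact hq 0 le_rfl (map_zero _)

lemma IsHurwitz.mul {p q : ℝ[X]} (hp : IsHurwitz p) (hq : IsHurwitz q) : IsHurwitz (p * q) :=
  fun s hs => by
    rw [map_mul]
    exact mul_ne_zero (hp s hs) (hq s hs)

lemma isHurwitz_one : IsHurwitz 1 := fun s _ => by simp

lemma evalC_eq_aeval_div (f : RatFunc ℝ) (s : ℂ) :
    evalC f s = aeval s f.num / aeval s f.denom := rfl

lemma isPoleAt_iff_aeval_denom {f : RatFunc ℝ} {s : ℂ} : IsPoleAt f s ↔ aeval s f.denom = 0 :=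
  Iff.rfl

lemma not_isPoleAt_div {p q : ℝ[X]} {s : ℂ} (hq : aeval s q ≠ 0) :
    ¬ IsPoleAt (algebraMap _ (RatFunc ℝ) p / algebraMap _ _ q) s := fun hpole => by
  obtain ⟨r, hr⟩ := RatFunc.denom_div_dvd p q
  rw [hr, map_mul, isPoleAt_iff_aeval_denom.1 hpole, zero_mul] at hq
  exact hq rfl

lemma evalC_div {p q : ℝ[X]} {s : ℂ} (hq : aeval s q ≠ 0) :
    evalC (algebraMap _ (RatFunc ℝ) p / algebraMap _ _ q) s = aeval s p / aeval s q := by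
  have hq₀ : q ≠ 0 := by rintro rfl; simp at hq
  have hrel := (RatFunc.num_mul_eq_mul_denom_iff hq₀).2
    (rfl : algebraMap _ (RatFunc ℝ) p / algebraMap _ _ q = _)
  rw [evalC_eq_aeval_div,
    div_eq_div_iff (mt isPoleAt_iff_aeval_denom.2 (not_isPoleAt_div hq)) hq, ← map_mul, hrel,
    map_mul]

lemma degree_num_div_le {p q : ℝ[X]} (hq : q ≠ 0) (hpq : p.degree ≤ q.degree) :
    (algebraMap _ (RatFunc ℝ) p / algebraMap _ _ q).num.degree ≤
      (algebraMap _ (RatFunc ℝ) p / algebraMap _ _ q).denom.degree := by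
  set f : RatFunc ℝ := algebraMap _ (RatFunc ℝ) p / algebraMap _ _ q with hf
  have hrel : f.num * q = p * f.denom := (RatFunc.num_mul_eq_mul_denom_iff hq).2 hf
  have hdeg : f.num.degree + q.degree ≤ f.denom.degree + q.degree := by
    rw [← degree_mul, hrel, degree_mul, add_comm]
    gcongr
  exact WithBot.le_of_add_le_add_right (degree_ne_bot.2 hq) hdeg

/-- The real algebra of stable proper rational functions, described as the fractions `p / q`
with `q` Hurwitz and `deg p ≤ deg q`; `mem_RHinf_iff` gives the reduced form. -/
def RHinf : Subalgebra ℝ (RatFunc ℝ) where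
  carrier := {f | ∃ p q : ℝ[X], IsHurwitz q ∧ p.degree ≤ q.degree ∧
    f = algebraMap _ _ p / algebraMap _ _ q}
  mul_mem' := by
    rintro _ _ ⟨p, q, hq, hpq, rfl⟩ ⟨p', q', hq', hpq', rfl⟩
    refine ⟨p * p', q * q', hq.mul hq', ?_, ?_⟩
    · rw [degree_mul, degree_mul]
      exact add_le_add hpq hpq'
    · rw [map_mul, map_mul, div_mul_div_comm]
  add_mem' := by
    rintro _ _ ⟨p, q, hq, hpq, rfl⟩ ⟨p', q', hq', hpq', rfl⟩
    refine ⟨p * q' + q * p', q * q', hq.mul hq', ?_, ?_⟩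
    · refine (degree_add_le _ _).trans (max_le ?_ ?_) <;> rw [degree_mul, degree_mul] <;> gcongr
    · rw [map_add, map_mul, map_mul, map_mul, div_add_div _ _
        (RatFunc.algebraMap_ne_zero hq.ne_zero) (RatFunc.algebraMap_ne_zero hq'.ne_zero)]
  algebraMap_mem' r := ⟨C r, 1, isHurwitz_one, by simpa using degree_C_le, by
    rw [RatFunc.algebraMap_eq_C, RatFunc.algebraMap_C, map_one, div_one]⟩

lemma mem_RHinf_iff {f : RatFunc ℝ} :
    f ∈ RHinf ↔ f.num.degree ≤ f.denom.degree ∧ ∀ s : ℂ, 0 ≤ s.re → ¬ IsPoleAt f s := by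
  constructor
  · rintro ⟨p, q, hq, hpq, rfl⟩
    exact ⟨degree_num_div_le hq.ne_zero hpq, fun s hs => not_isPoleAt_div (hq s hs)⟩
  · rintro ⟨hdeg, hpole⟩
    exact ⟨f.num, f.denom, hpole, hdeg, f.num_div_denom.symm⟩

lemma isHurwitz_denom {f : RatFunc ℝ} (hf : f ∈ RHinf) : IsHurwitz f.denom :=
  (mem_RHinf_iff.1 hf).2

lemma evalC_add {f g : RatFunc ℝ} (hf : f ∈ RHinf) (hg : g ∈ RHinf) {s : ℂ} (hs : 0 ≤ s.re) :
    evalC (f + g) s = evalC f s + evalC g s :=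
  RatFunc.eval_add _ _ (isHurwitz_denom hf s hs) (isHurwitz_denom hg s hs)

lemma evalC_mul {f g : RatFunc ℝ} (hf : f ∈ RHinf) (hg : g ∈ RHinf) {s : ℂ} (hs : 0 ≤ s.re) :
    evalC (f * g) s = evalC f s * evalC g s :=
  RatFunc.eval_mul _ _ (isHurwitz_denom hf s hs) (isHurwitz_denom hg s hs)

lemma evalC_algebraMap (r : ℝ) (s : ℂ) : evalC (algebraMap ℝ (RatFunc ℝ) r) s = r := by
  simp [evalC, RatFunc.algebraMap_eq_C]

lemma evalC_smul {f : RatFunc ℝ} (hf : f ∈ RHinf) (r : ℝ) {s : ℂ} (hs : 0 ≤ s.re) :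
    evalC (r • f) s = r * evalC f s := by
  rw [Algebra.smul_def, evalC_mul (algebraMap_mem RHinf r) hf hs, evalC_algebraMap]

lemma evalC_ofReal (f : RatFunc ℝ) (x : ℝ) :
    evalC f (x : ℂ) = ((f.eval (RingHom.id ℝ) x : ℝ) : ℂ) := by
  have haeval (p : ℝ[X]) : aeval (x : ℂ) p = ((p.eval x : ℝ) : ℂ) :=
    aeval_algebraMap_apply_eq_algebraMap_eval x p
  rw [evalC_eq_aeval_div, haeval, haeval, ← Complex.ofReal_div]
  rfl

lemma evalC_conj (f : RatFunc ℝ) (s : ℂ) :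
    evalC f (starRingEnd ℂ s) = starRingEnd ℂ (evalC f s) := by
  rw [evalC_eq_aeval_div, evalC_eq_aeval_div, map_div₀, aeval_conj, aeval_conj]

lemma differentiableAt_evalC {f : RatFunc ℝ} (hf : f ∈ RHinf) {s : ℂ} (hs : 0 ≤ s.re) :
    DifferentiableAt ℂ (evalC f) s :=
  (f.num.differentiable_aeval s).div (f.denom.differentiable_aeval s) (isHurwitz_denom hf s hs)

lemma tendsto_aeval_div_aeval_cobounded {p q : ℝ[X]} {N : ℕ} (hp : p.natDegree ≤ N)
    (hq : q.natDegree ≤ N) (hqN : q.coeff N ≠ 0) :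
    Tendsto (fun s : ℂ => aeval s p / aeval s q) (Bornology.cobounded ℂ)
      (𝓝 ((p.coeff N / q.coeff N : ℝ) : ℂ)) := by
  have hreflect {r : ℝ[X]} (hr : r.natDegree ≤ N) {s : ℂ} (hs : s ≠ 0) :
      aeval s r = aeval s⁻¹ (reflect N r) * s ^ N := by
    let := invertibleOfNonzero hs
    simpa [aeval_def] using (eval₂_reflect_mul_pow (algebraMap ℝ ℂ) s N r hr).symm
  have hlim (r : ℝ[X]) : Tendsto (fun s : ℂ => aeval s⁻¹ (reflect N r)) (Bornology.cobounded ℂ)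
      (𝓝 (r.coeff N : ℂ)) := by
    have hzero : aeval (0 : ℂ) (reflect N r) = (r.coeff N : ℂ) := by
      simp [aeval_def, eval₂_at_zero]
    rw [← hzero]
    exact ((reflect N r).continuous_aeval.tendsto 0).comp tendsto_inv₀_cobounded
  rw [Complex.ofReal_div]
  refine ((hlim p).div (hlim q) (by exact_mod_cast hqN)).congr' ?_
  filter_upwards [Bornology.eventually_ne_cobounded 0] with s hs
  rw [Pi.div_apply, hreflect hp hs, hreflect hq hs, mul_div_mul_right _ _ (pow_ne_zero N hs)]

lemma tendsto_evalC_cobounded {f : RatFunc ℝ} (hf : f ∈ RHinf) :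
    Tendsto (evalC f) (Bornology.cobounded ℂ) (𝓝 (atInfinity f : ℂ)) := by
  have hdeg : f.num.natDegree ≤ f.denom.natDegree := natDegree_le_natDegree (mem_RHinf_iff.1 hf).1
  have hinf : atInfinity f = f.num.coeff f.denom.natDegree / f.denom.coeff f.denom.natDegree := by
    unfold atInfinity
    split_ifs with h
    · rw [← natDegree_eq_of_degree_eq h, coeff_natDegree, natDegree_eq_of_degree_eq h,
        coeff_natDegree]
    · rw [coeff_eq_zero_of_degree_lt, zero_div]
      rw [← degree_eq_natDegree f.denom_ne_zero]
      exact (mem_RHinf_iff.1 hf).1.lt_of_ne h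
  rw [hinf]
  exact tendsto_aeval_div_aeval_cobounded hdeg le_rfl (by simpa using f.denom_ne_zero)

lemma tendsto_evalC_ofReal_atTop {f : RatFunc ℝ} (hf : f ∈ RHinf) :
    Tendsto (fun x : ℝ => evalC f x) atTop (𝓝 (atInfinity f : ℂ)) :=
  (tendsto_evalC_cobounded hf).comp (RCLike.tendsto_ofReal_atTop_cobounded ℂ)

lemma atInfinity_algebraMap (r : ℝ) : atInfinity (algebraMap ℝ (RatFunc ℝ) r) = r := by
  have hlim := tendsto_evalC_ofReal_atTop (algebraMap_mem RHinf r)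
  simp only [evalC_algebraMap] at hlim
  exact_mod_cast (tendsto_const_nhds_iff.1 hlim).symm

lemma atInfinity_add {f g : RatFunc ℝ} (hf : f ∈ RHinf) (hg : g ∈ RHinf) :
    atInfinity (f + g) = atInfinity f + atInfinity g := by
  have hlim := ((tendsto_evalC_ofReal_atTop hf).add (tendsto_evalC_ofReal_atTop hg)).congr' <|
    (eventually_ge_atTop 0).mono fun x hx => (evalC_add hf hg (by simpa using hx)).symm
  exact_mod_cast tendsto_nhds_unique (tendsto_evalC_ofReal_atTop (add_mem hf hg)) hlim

lemma atInfinity_mul {f g : RatFunc ℝ} (hf : f ∈ RHinf) (hg : g ∈ RHinf) :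
    atInfinity (f * g) = atInfinity f * atInfinity g := by
  have hlim := ((tendsto_evalC_ofReal_atTop hf).mul (tendsto_evalC_ofReal_atTop hg)).congr' <|
    (eventually_ge_atTop 0).mono fun x hx => (evalC_mul hf hg (by simpa using hx)).symm
  exact_mod_cast tendsto_nhds_unique (tendsto_evalC_ofReal_atTop (mul_mem hf hg)) hlim

lemma atInfinity_smul {f : RatFunc ℝ} (hf : f ∈ RHinf) (r : ℝ) :
    atInfinity (r • f) = r * atInfinity f := by
  rw [Algebra.smul_def, atInfinity_mul (algebraMap_mem RHinf r) hf, atInfinity_algebraMap]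

end RationalFunctions

section Disc

/-- The Cayley transform, mapping the closed unit disc without `1` onto the closed right half
plane, the circle onto the imaginary axis and `1` to the point at infinity. -/
def cayley (z : ℂ) : ℂ := (1 + z) / (1 - z)

lemma cayley_re (z : ℂ) : (cayley z).re = (1 - Complex.normSq z) / Complex.normSq (1 - z) := by
  simp only [cayley, Complex.div_re, Complex.normSq_apply, Complex.add_re, Complex.add_im,
    Complex.sub_re, Complex.sub_im, Complex.one_re, Complex.one_im]
  ring

lemma cayley_re_nonneg {z : ℂ} (hz : ‖z‖ ≤ 1) : 0 ≤ (cayley z).re := by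
  rw [cayley_re, Complex.normSq_eq_norm_sq]
  exact div_nonneg (sub_nonneg.2 (pow_le_one₀ (norm_nonneg z) hz)) (Complex.normSq_nonneg _)

lemma cayley_eq_jw_im {z : ℂ} (hz : ‖z‖ = 1) : cayley z = jw (cayley z).im := by
  have hre : (cayley z).re = 0 := by simp [cayley_re, Complex.normSq_eq_norm_sq, hz]
  apply Complex.ext <;> simp [jw, hre]

lemma exists_cayley_eq {s : ℂ} (hs : 0 ≤ s.re) : ∃ z, ‖z‖ ≤ 1 ∧ z ≠ 1 ∧ cayley z = s := by
  have hs₁ : s + 1 ≠ 0 := fun h => by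
    have := congrArg Complex.re h
    simp only [Complex.add_re, Complex.one_re, Complex.zero_re] at this
    linarith
  have hone_sub : 1 - (s - 1) / (s + 1) = 2 / (s + 1) := by field_simp; ring
  refine ⟨(s - 1) / (s + 1), ?_, fun h => ?_, ?_⟩
  · rw [norm_div, div_le_one (norm_pos_iff.2 hs₁), ← sq_le_sq₀ (norm_nonneg _) (norm_nonneg _),
      ← Complex.normSq_eq_norm_sq, ← Complex.normSq_eq_norm_sq]
    simp only [Complex.normSq_apply, Complex.sub_re, Complex.sub_im, Complex.add_re,
      Complex.add_im, Complex.one_re, Complex.one_im]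
    nlinarith
  · rw [h, sub_self, eq_comm, div_eq_zero_iff] at hone_sub
    simp [hs₁] at hone_sub
  · rw [cayley, hone_sub]
    field_simp
    ring

lemma differentiableAt_cayley {z : ℂ} (hz : z ≠ 1) : DifferentiableAt ℂ cayley z :=
  ((differentiableAt_const 1).add differentiableAt_id).div
    ((differentiableAt_const 1).sub differentiableAt_id) (sub_ne_zero.2 hz.symm)

lemma tendsto_cayley_cobounded : Tendsto cayley (𝓝[≠] 1) (Bornology.cobounded ℂ) := by
  have hinv : Tendsto (fun z : ℂ => (1 - z) / (1 + z)) (𝓝[≠] 1) (𝓝[≠] 0) := by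
    refine tendsto_nhdsWithin_iff.2 ⟨?_, ?_⟩
    · have : ContinuousAt (fun z : ℂ => (1 - z) / (1 + z)) 1 := by fun_prop (disch := norm_num)
      simpa using this.tendsto.mono_left (nhdsWithin_le_nhds (s := {1}ᶜ))
    · have hadd : ∀ᶠ z : ℂ in 𝓝[≠] 1, 1 + z ≠ 0 :=
        nhdsWithin_le_nhds ((by fun_prop : ContinuousAt (fun z : ℂ => 1 + z) 1).eventually_ne
          (by norm_num))
      filter_upwards [self_mem_nhdsWithin, hadd] with z hz hz'
      exact div_ne_zero (sub_ne_zero.2 (Ne.symm hz)) hz'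
  exact (tendsto_inv₀_nhdsNE_zero.comp hinv).congr fun z => inv_div _ _

/-- The transfer function `f` in the disc coordinate `z`, with its value at infinity placed at
`z = 1`. -/
def diskEval (f : RatFunc ℝ) : ℂ → ℂ :=
  Function.update (evalC f ∘ cayley) 1 (atInfinity f)

lemma diskEval_one (f : RatFunc ℝ) : diskEval f 1 = atInfinity f :=
  Function.update_self ..

lemma diskEval_of_ne_one (f : RatFunc ℝ) {z : ℂ} (hz : z ≠ 1) :
    diskEval f z = evalC f (cayley z) :=
  Function.update_of_ne hz ..

lemma continuousOn_diskEval {f : RatFunc ℝ} (hf : f ∈ RHinf) :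
    ContinuousOn (diskEval f) (Metric.closedBall 0 1) := by
  intro z hz
  apply ContinuousAt.continuousWithinAt
  rcases eq_or_ne z 1 with rfl | hne
  · exact continuousAt_update_same.2 ((tendsto_evalC_cobounded hf).comp tendsto_cayley_cobounded)
  · refine (continuousAt_update_of_ne hne).2 (ContinuousAt.comp ?_
      (differentiableAt_cayley hne).continuousAt)
    exact (differentiableAt_evalC hf (cayley_re_nonneg (by simpa using hz))).continuousAt

lemma differentiableOn_diskEval {f : RatFunc ℝ} (hf : f ∈ RHinf) :
    DifferentiableOn ℂ (diskEval f) (Metric.ball 0 1) := by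
  intro z hz
  have hz' : ‖z‖ < 1 := by simpa using hz
  have hne : z ≠ 1 := by rintro rfl; simp at hz'
  apply DifferentiableAt.differentiableWithinAt
  refine ((differentiableAt_evalC hf (cayley_re_nonneg hz'.le)).comp z
    (differentiableAt_cayley hne)).congr_of_eventuallyEq ?_
  filter_upwards [isOpen_ne.mem_nhds hne] with w hw using diskEval_of_ne_one f hw

lemma diffContOnCl_diskEval {f : RatFunc ℝ} (hf : f ∈ RHinf) :
    DiffContOnCl ℂ (diskEval f) (Metric.ball 0 1) :=
  ⟨differentiableOn_diskEval hf, by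
    rw [closure_ball _ one_ne_zero]; exact continuousOn_diskEval hf⟩

lemma diskEval_algebraMap (r : ℝ) (z : ℂ) : diskEval (algebraMap ℝ (RatFunc ℝ) r) z = r := by
  rcases eq_or_ne z 1 with rfl | hne
  · rw [diskEval_one, atInfinity_algebraMap]
  · rw [diskEval_of_ne_one _ hne, evalC_algebraMap]

lemma diskEval_add {f g : RatFunc ℝ} (hf : f ∈ RHinf) (hg : g ∈ RHinf) {z : ℂ} (hz : ‖z‖ ≤ 1) :
    diskEval (f + g) z = diskEval f z + diskEval g z := by
  rcases eq_or_ne z 1 with rfl | hne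
  · simp only [diskEval_one, atInfinity_add hf hg, Complex.ofReal_add]
  · simp only [diskEval_of_ne_one _ hne, evalC_add hf hg (cayley_re_nonneg hz)]

lemma diskEval_mul {f g : RatFunc ℝ} (hf : f ∈ RHinf) (hg : g ∈ RHinf) {z : ℂ} (hz : ‖z‖ ≤ 1) :
    diskEval (f * g) z = diskEval f z * diskEval g z := by
  rcases eq_or_ne z 1 with rfl | hne
  · simp only [diskEval_one, atInfinity_mul hf hg, Complex.ofReal_mul]
  · simp only [diskEval_of_ne_one _ hne, evalC_mul hf hg (cayley_re_nonneg hz)]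

/-- Evaluation at a point of the closed disc, as a homomorphism on `RHinf`. -/
def diskEvalHom (z : ℂ) (hz : ‖z‖ ≤ 1) : RHinf →ₐ[ℝ] ℂ where
  toFun f := diskEval f z
  map_one' := by simpa using diskEval_algebraMap 1 z
  map_zero' := by simpa using diskEval_algebraMap 0 z
  map_add' f g := diskEval_add f.2 g.2 hz
  map_mul' f g := diskEval_mul f.2 g.2 hz
  commutes' r := diskEval_algebraMap r z

lemma isUnit_RHinf_iff {f : RHinf} : IsUnit f ↔ ∀ z : ℂ, ‖z‖ ≤ 1 → diskEval f z ≠ 0 := by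
  refine ⟨fun hf z hz => (hf.map (diskEvalHom z hz)).ne_zero, fun hf => ?_⟩
  have hnum : IsHurwitz (f : RatFunc ℝ).num := fun s hs hzero => by
    obtain ⟨z, hz, hz₁, rfl⟩ := exists_cayley_eq hs
    apply hf z hz
    rw [diskEval_of_ne_one _ hz₁, evalC_eq_aeval_div, hzero, zero_div]
  have hdeg : (f : RatFunc ℝ).num.degree = (f : RatFunc ℝ).denom.degree := by
    by_contra hne
    apply hf 1 norm_one.le
    rw [diskEval_one, atInfinity, if_neg hne, Complex.ofReal_zero]
  have hinv : (f : RatFunc ℝ)⁻¹ ∈ RHinf := by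
    refine ⟨(f : RatFunc ℝ).denom, (f : RatFunc ℝ).num, hnum, hdeg.ge, ?_⟩
    rw [← inv_div, RatFunc.num_div_denom]
  have hf₀ : (f : RatFunc ℝ) ≠ 0 := fun h => hnum.ne_zero (by rw [h, RatFunc.num_zero])
  exact IsUnit.of_mul_eq_one ⟨_, hinv⟩ (Subtype.ext (mul_inv_cancel₀ hf₀))

end Disc

section TransferMatrices

variable {m : Type*} [Fintype m]

lemma memRHinf_iff {G : Matrix m m (RatFunc ℝ)} : MemRHinf G ↔ ∀ i j, G i j ∈ RHinf := by
  simp only [mem_RHinf_iff, MemRHinf]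
  exact ⟨fun h i j => ⟨h.1 i j, fun s hs => h.2 s hs i j⟩,
    fun h => ⟨fun i j => (h i j).1, fun s hs i j => (h i j).2 s hs⟩⟩

lemma MemRHinf.exists_map_val {G : Matrix m m (RatFunc ℝ)} (hG : MemRHinf G) :
    ∃ G' : Matrix m m RHinf, G'.map RHinf.val = G :=
  ⟨Matrix.of fun i j => ⟨G i j, memRHinf_iff.1 hG i j⟩, rfl⟩

lemma memRHinf_map_val (G : Matrix m m RHinf) : MemRHinf (G.map RHinf.val) :=
  memRHinf_iff.2 fun i j => (G i j).2

lemma MemRHinf.add {G H : Matrix m m (RatFunc ℝ)} (hG : MemRHinf G) (hH : MemRHinf H) :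
    MemRHinf (G + H) :=
  memRHinf_iff.2 fun i j => add_mem (memRHinf_iff.1 hG i j) (memRHinf_iff.1 hH i j)

lemma map_det_one_sub_mul [DecidableEq m] {R S : Type*} [CommRing R] [CommRing S] (φ : R →+* S)
    (A B : Matrix m m R) : φ (1 - A * B).det = (1 - A.map φ * B.map φ).det := by
  rw [RingHom.map_det, RingHom.mapMatrix_apply, Matrix.map_sub _ (map_sub φ), Matrix.map_mul,
    Matrix.map_one φ (map_zero φ) (map_one φ)]

lemma feedbackStable_map_val_iff {P C : Matrix (Fin n) (Fin n) RHinf} :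
    FeedbackStable (P.map RHinf.val) (C.map RHinf.val) ↔ IsUnit (1 - P * C).det := by
  have hmap : (1 - P * C).map RHinf.val = 1 - P.map RHinf.val * C.map RHinf.val := by
    rw [Matrix.map_sub _ (map_sub _), Matrix.map_mul, Matrix.map_one _ (map_zero _) (map_one _)]
  have hdet : RHinf.val (1 - P * C).det = (1 - P.map RHinf.val * C.map RHinf.val).det :=
    map_det_one_sub_mul (RHinf.val : RHinf →+* RatFunc ℝ) P C
  rw [FeedbackStable, ← hdet, ← hmap]
  constructor
  · rintro ⟨hne, hmem⟩
    have hinv : MemRHinf ((1 - P * C).map RHinf.val)⁻¹ := memRHinf_iff.2 fun i j =>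
      memRHinf_iff.1 hmem (Sum.inl i) (Sum.inl j)
    obtain ⟨Q, hQ⟩ := hinv.exists_map_val
    have hmul : (1 - P * C) * Q = 1 := by
      apply Matrix.map_injective (f := RHinf.val) Subtype.val_injective
      dsimp only
      rw [Matrix.map_mul, hQ, Matrix.map_one _ (map_zero _) (map_one _), Matrix.mul_nonsing_inv]
      rw [hmap, ← hdet]
      exact hne.isUnit
    exact (Matrix.isUnit_iff_isUnit_det _).1 (IsUnit.of_mul_eq_one Q hmul)
  · intro hunit
    have hinv : ((1 - P * C).map RHinf.val)⁻¹ = (1 - P * C)⁻¹.map RHinf.val := by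
      apply Matrix.inv_eq_right_inv
      rw [← Matrix.map_mul, Matrix.mul_nonsing_inv _ hunit,
        Matrix.map_one _ (map_zero _) (map_one _)]
    refine ⟨(hunit.map RHinf.val).ne_zero, ?_⟩
    rw [hinv, ← Matrix.map_mul, ← Matrix.map_mul, ← Matrix.map_mul, ← Matrix.fromBlocks_map]
    exact memRHinf_map_val _

/-- The transfer matrix `G` in the disc coordinate. -/
def diskEvalM (G : Matrix m m (RatFunc ℝ)) (z : ℂ) : Matrix m m ℂ :=
  G.map fun f => diskEval f z

lemma continuousOn_diskEvalM {G : Matrix m m (RatFunc ℝ)} (hG : MemRHinf G) :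
    ContinuousOn (diskEvalM G) (Metric.closedBall 0 1) :=
  continuousOn_pi.2 fun i => continuousOn_pi.2 fun j =>
    continuousOn_diskEval (memRHinf_iff.1 hG i j)

lemma MemRHinf.smul {G : Matrix m m (RatFunc ℝ)} (hG : MemRHinf G) (r : ℝ) : MemRHinf (r • G) :=
  memRHinf_iff.2 fun i j => RHinf.smul_mem (memRHinf_iff.1 hG i j) r

lemma diskEvalM_smul {G : Matrix m m (RatFunc ℝ)} (hG : MemRHinf G) (r : ℝ) {z : ℂ}
    (hz : ‖z‖ ≤ 1) : diskEvalM (r • G) z = (r : ℂ) • diskEvalM G z := by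
  ext i j
  exact map_smul (diskEvalHom z hz) r ⟨G i j, memRHinf_iff.1 hG i j⟩

lemma MemRHinf.det_one_sub_mul_mem [DecidableEq m] {P C : Matrix m m (RatFunc ℝ)}
    (hP : MemRHinf P) (hC : MemRHinf C) : (1 - P * C).det ∈ RHinf := by
  obtain ⟨P, rfl⟩ := hP.exists_map_val
  obtain ⟨C, rfl⟩ := hC.exists_map_val
  have hdet := map_det_one_sub_mul (RHinf.val : RHinf →+* RatFunc ℝ) P C
  exact hdet ▸ (1 - P * C).det.2

lemma diskEval_det_one_sub_mul [DecidableEq m] {P C : Matrix m m (RatFunc ℝ)} (hP : MemRHinf P)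
    (hC : MemRHinf C) {z : ℂ} (hz : ‖z‖ ≤ 1) :
    diskEval (1 - P * C).det z = (1 - diskEvalM P z * diskEvalM C z).det := by
  obtain ⟨P, rfl⟩ := hP.exists_map_val
  obtain ⟨C, rfl⟩ := hC.exists_map_val
  rw [show (1 - P.map RHinf.val * C.map RHinf.val).det = RHinf.val (1 - P * C).det from
    (map_det_one_sub_mul (RHinf.val : RHinf →+* RatFunc ℝ) P C).symm]
  exact map_det_one_sub_mul (diskEvalHom z hz : RHinf →+* ℂ) P C

lemma feedbackStable_iff_forall_diskEval {P C : Matrix (Fin n) (Fin n) (RatFunc ℝ)}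
    (hP : MemRHinf P) (hC : MemRHinf C) :
    FeedbackStable P C ↔ ∀ z : ℂ, ‖z‖ ≤ 1 → diskEval (1 - P * C).det z ≠ 0 := by
  obtain ⟨P, rfl⟩ := hP.exists_map_val
  obtain ⟨C, rfl⟩ := hC.exists_map_val
  rw [feedbackStable_map_val_iff, isUnit_RHinf_iff]
  have hdet := map_det_one_sub_mul (RHinf.val : RHinf →+* RatFunc ℝ) P C
  exact hdet ▸ Iff.rfl

lemma diskEvalM_one (G : Matrix (Fin n) (Fin n) (RatFunc ℝ)) :
    diskEvalM G 1 = (evalInf G).map Complex.ofReal :=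
  Matrix.ext fun i j => diskEval_one (G i j)

lemma diskEvalM_of_ne_one (G : Matrix (Fin n) (Fin n) (RatFunc ℝ)) {z : ℂ} (hz : z ≠ 1) :
    diskEvalM G z = evalM G (cayley z) :=
  Matrix.ext fun i j => diskEval_of_ne_one (G i j) hz

lemma evalM_ofReal (G : Matrix (Fin n) (Fin n) (RatFunc ℝ)) (x : ℝ) :
    evalM G x = (evalR G x).map Complex.ofReal :=
  Matrix.ext fun i j => evalC_ofReal (G i j) x

end TransferMatrices

section FunctionTheory

variable {U : Set ℂ}

lemma le_norm_of_forall_mem_frontier_le_norm (hU : Bornology.IsBounded U) {f : ℂ → ℂ}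
    (hf : DiffContOnCl ℂ f U) (hne : ∀ z ∈ closure U, f z ≠ 0) {δ : ℝ} (hδ : 0 < δ)
    (hfr : ∀ z ∈ frontier U, δ ≤ ‖f z‖) {z : ℂ} (hz : z ∈ closure U) : δ ≤ ‖f z‖ := by
  have hinv : ‖f⁻¹ z‖ ≤ δ⁻¹ :=
    Complex.norm_le_of_forall_mem_frontier_norm_le hU (hf.inv hne) (fun w hw => by
      rw [Pi.inv_apply, norm_inv]
      exact inv_anti₀ hδ (hfr w hw)) hz
  rw [Pi.inv_apply, norm_inv] at hinv
  exact (inv_le_inv₀ (norm_pos_iff.2 (hne z hz)) hδ).1 hinv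

lemma ne_zero_on_closure_of_norm_sub_lt (hU : Bornology.IsBounded U) {f g : ℂ → ℂ}
    (hf : DiffContOnCl ℂ f U) (hne : ∀ z ∈ closure U, f z ≠ 0) {δ : ℝ} (hδ : 0 < δ)
    (hfr : ∀ z ∈ frontier U, δ ≤ ‖f z‖) (hfg : ∀ z ∈ closure U, ‖f z - g z‖ < δ) :
    ∀ z ∈ closure U, g z ≠ 0 := fun z hz hgz => by
  have hlt := hfg z hz
  rw [hgz, sub_zero] at hlt
  exact hlt.not_ge (le_norm_of_forall_mem_frontier_le_norm hU hf hne hδ hfr hz)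

theorem ne_zero_on_closure_iff_of_homotopy {T : Type*} [TopologicalSpace T] {s : Set T}
    (hs : IsPreconnected s) (hU : Bornology.IsBounded U) {F : T → ℂ → ℂ}
    (hF : ContinuousOn F.uncurry (s ×ˢ closure U)) (hd : ∀ t ∈ s, DiffContOnCl ℂ (F t) U)
    (hfr : ∀ t ∈ s, ∀ z ∈ frontier U, F t z ≠ 0) {a b : T} (ha : a ∈ s) (hb : b ∈ s) :
    (∀ z ∈ closure U, F a z ≠ 0) ↔ ∀ z ∈ closure U, F b z ≠ 0 := by
  refine hs.induction₂ (fun t u => (∀ z ∈ closure U, F t z ≠ 0) ↔ ∀ z ∈ closure U, F u z ≠ 0)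
    (fun t ht => ?_) (fun _ _ _ _ _ _ => Iff.trans) (fun _ _ _ _ => Iff.symm) ha hb
  have hfrontier : frontier U ⊆ closure U := frontier_subset_closure
  obtain ⟨δ, hδ, hδle⟩ := (hU.isCompact_closure.of_isClosed_subset isClosed_frontier
    hfrontier).exists_forall_le' ((hd t ht).continuousOn.mono hfrontier).norm
    fun z hz => norm_pos_iff.2 (hfr t ht z hz)
  obtain ⟨v, hv, hclose⟩ := hU.isCompact_closure.mem_uniformity_of_prod hF ht
    (Metric.dist_mem_uniformity (half_pos hδ))
  filter_upwards [hv, self_mem_nhdsWithin] with u huv hu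
  have hut : ∀ z ∈ closure U, ‖F u z - F t z‖ < δ / 2 := fun z hz => by
    simpa [dist_eq_norm] using hclose u huv z hz
  constructor <;> intro hne
  · refine ne_zero_on_closure_of_norm_sub_lt hU (hd t ht) hne (half_pos hδ)
      (fun z hz => (half_le_self hδ.le).trans (hδle z hz)) fun z hz => ?_
    rw [norm_sub_rev]
    exact hut z hz
  · refine ne_zero_on_closure_of_norm_sub_lt hU (hd u hu) hne (half_pos hδ) (fun z hz => ?_) hut
    have htri := norm_sub_norm_le (F t z) (F u z)
    rw [norm_sub_rev] at htri
    linarith [hut z (hfrontier hz), hδle z hz]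

lemma re_nonneg_of_forall_mem_frontier (hU : Bornology.IsBounded U) {f : ℂ → ℂ}
    (hf : DiffContOnCl ℂ f U) (hfr : ∀ z ∈ frontier U, 0 ≤ (f z).re) {z : ℂ}
    (hz : z ∈ closure U) : 0 ≤ (f z).re := by
  have hexp : DiffContOnCl ℂ (fun w => Complex.exp (-f w)) U :=
    Complex.differentiable_exp.comp_diffContOnCl hf.neg
  have hnorm := Complex.norm_le_of_forall_mem_frontier_norm_le hU hexp (C := 1)
    (fun w hw => by simpa [Complex.norm_exp] using hfr w hw) hz
  simpa [Complex.norm_exp] using hnorm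

end FunctionTheory

section StaticGain

lemma jw_re (ω : ℝ) : (jw ω).re = 0 := by simp [jw]

lemma star_jw (ω : ℝ) : starRingEnd ℂ (jw ω) = jw (-ω) := by simp [jw]

lemma continuous_jw : Continuous jw := by unfold jw; fun_prop

lemma tendsto_jw_atTop : Tendsto jw atTop (Bornology.cobounded ℂ) :=
  (tendsto_mul_left_cobounded Complex.I_ne_zero).comp (RCLike.tendsto_ofReal_atTop_cobounded ℂ)

lemma continuous_evalC_jw {f : RatFunc ℝ} (hf : f ∈ RHinf) : Continuous fun ω => evalC f (jw ω) :=
  continuous_iff_continuousAt.2 fun ω =>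
    (differentiableAt_evalC hf (jw_re ω).ge).continuousAt.comp continuous_jw.continuousAt

lemma evalC_jw_re_nonneg {f : RatFunc ℝ} (hf : f ∈ RHinf)
    (hre : ∀ ω : ℝ, 0 < ω → 0 ≤ (evalC f (jw ω)).re) (ω : ℝ) : 0 ≤ (evalC f (jw ω)).re := by
  have hpos : ∀ ω, 0 ≤ ω → 0 ≤ (evalC f (jw ω)).re := by
    have hclosed : IsClosed {ω | 0 ≤ (evalC f (jw ω)).re} :=
      isClosed_Ici.preimage (Complex.continuous_re.comp (continuous_evalC_jw hf))
    have := closure_minimal (s := Set.Ioi (0 : ℝ)) (fun ω hω => hre ω hω) hclosed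
    rwa [closure_Ioi] at this
  rcases le_total 0 ω with h | h
  · exact hpos ω h
  · rw [← neg_neg ω, ← star_jw, evalC_conj, Complex.conj_re]
    exact hpos _ (neg_nonneg.2 h)

theorem evalC_re_nonneg_of_forall_jw {f : RatFunc ℝ} (hf : f ∈ RHinf)
    (hre : ∀ ω : ℝ, 0 < ω → 0 ≤ (evalC f (jw ω)).re) {s : ℂ} (hs : 0 ≤ s.re) :
    0 ≤ (evalC f s).re := by
  obtain ⟨z, hz, hz₁, rfl⟩ := exists_cayley_eq hs
  rw [← diskEval_of_ne_one f hz₁]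
  refine re_nonneg_of_forall_mem_frontier Metric.isBounded_ball (diffContOnCl_diskEval hf)
    (fun w hw => ?_) (by simpa [closure_ball (0 : ℂ) one_ne_zero] using hz)
  rcases eq_or_ne w 1 with rfl | hw₁
  · rw [diskEval_one, Complex.ofReal_re]
    have hlim := (Complex.continuous_re.tendsto _).comp
      ((tendsto_evalC_cobounded hf).comp tendsto_jw_atTop)
    exact ge_of_tendsto' hlim fun ω => evalC_jw_re_nonneg hf hre ω
  · rw [diskEval_of_ne_one f hw₁, cayley_eq_jw_im (by simpa [frontier_ball] using hw)]
    exact evalC_jw_re_nonneg hf hre _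

lemma div_X_mem_RHinf {f : RatFunc ℝ} (hf : f ∈ RHinf) (h0 : evalC f 0 = 0) :
    f / RatFunc.X ∈ RHinf := by
  obtain ⟨p, q, hq, hpq, rfl⟩ := hf
  have hp0 : p.coeff 0 = 0 := by
    rw [evalC_div (hq 0 le_rfl), div_eq_zero_iff, or_iff_left (hq 0 le_rfl)] at h0
    simpa [aeval_def, eval₂_at_zero] using h0
  obtain ⟨r, rfl⟩ := X_dvd_iff.2 hp0
  refine ⟨r, q, hq, le_trans ?_ hpq, ?_⟩
  · rw [mul_comm]; exact degree_le_mul_left r X_ne_zero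
  · rw [map_mul, RatFunc.algebraMap_X]
    field_simp [RatFunc.X_ne_zero]

lemma evalC_div_X {f : RatFunc ℝ} (hf : f / RatFunc.X ∈ RHinf) {s : ℂ} (hs : 0 ≤ s.re)
    (hs₀ : s ≠ 0) : evalC (f / RatFunc.X) s = evalC f s / s := by
  have hmul : evalC (f / RatFunc.X * RatFunc.X) s = evalC (f / RatFunc.X) s * s := by
    simpa [evalC] using RatFunc.eval_mul (algebraMap ℝ ℂ) s (isHurwitz_denom hf s hs)
      (y := RatFunc.X) (by simp)
  rw [div_mul_cancel₀ _ RatFunc.X_ne_zero] at hmul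
  rw [hmul, mul_div_cancel_right₀ _ hs₀]

-- The slope `(g(0) - g(s)) / s` is stable and positive real, hence nonnegative for real `s > 0`.
theorem eval_le_eval_zero {g : RatFunc ℝ} (hg : g ∈ RHinf)
    (him : ∀ ω : ℝ, 0 < ω → (evalC g (jw ω)).im ≤ 0) {x : ℝ} (hx : 0 < x) :
    g.eval (RingHom.id ℝ) x ≤ g.eval (RingHom.id ℝ) 0 := by
  set g₀ := g.eval (RingHom.id ℝ) 0 with hg₀
  set f : RatFunc ℝ := algebraMap ℝ (RatFunc ℝ) g₀ + (-1 : ℝ) • g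
  have hf : f ∈ RHinf := add_mem (algebraMap_mem RHinf g₀) (RHinf.smul_mem hg _)
  have hevalf {s : ℂ} (hs : 0 ≤ s.re) : evalC f s = g₀ - evalC g s := by
    rw [evalC_add (algebraMap_mem RHinf g₀) (RHinf.smul_mem hg _) hs, evalC_algebraMap,
      evalC_smul hg _ hs, Complex.ofReal_neg, Complex.ofReal_one, neg_one_mul, sub_eq_add_neg]
  have hslope : f / RatFunc.X ∈ RHinf := div_X_mem_RHinf hf (by
    rw [hevalf le_rfl, hg₀, ← evalC_ofReal, Complex.ofReal_zero, sub_self])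
  have hpos := evalC_re_nonneg_of_forall_jw hslope (fun ω hω => ?_)
    (s := (x : ℂ)) (by simpa using hx.le)
  · rw [evalC_div_X hslope (by simpa using hx.le) (by exact_mod_cast hx.ne'),
      hevalf (by simpa using hx.le), evalC_ofReal, ← Complex.ofReal_sub, ← Complex.ofReal_div,
      Complex.ofReal_re] at hpos
    exact sub_nonneg.1 (nonneg_of_mul_nonneg_left (div_eq_mul_inv _ x ▸ hpos) (inv_pos.2 hx))
  · have hjw : jw ω ≠ 0 := by simp [jw, hω.ne']
    rw [evalC_div_X hslope (jw_re ω).ge hjw, hevalf (jw_re ω).ge]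
    have hre : ((g₀ - evalC g (jw ω)) / jw ω).re = -(evalC g (jw ω)).im / ω := by
      rw [jw, ← div_div, Complex.div_I, Complex.div_ofReal_re]
      simp
    rw [hre]
    exact div_nonneg (neg_nonneg.2 (him ω hω)) hω.le

theorem atInfinity_le_eval_zero {g : RatFunc ℝ} (hg : g ∈ RHinf)
    (him : ∀ ω : ℝ, 0 < ω → (evalC g (jw ω)).im ≤ 0) :
    atInfinity g ≤ g.eval (RingHom.id ℝ) 0 := by
  have hlim := (Complex.continuous_re.tendsto _).comp (tendsto_evalC_ofReal_atTop hg)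
  refine le_of_tendsto hlim ((eventually_gt_atTop 0).mono fun x hx => ?_)
  rw [Function.comp_apply, evalC_ofReal, Complex.ofReal_re]
  exact eval_le_eval_zero hg him hx

end StaticGain

section Kernel

lemma I_mul_sub_star (w : ℂ) : Complex.I * (w - star w) = ((-2 * w.im : ℝ) : ℂ) := by
  rw [Complex.star_def, Complex.sub_conj]
  push_cast
  linear_combination 2 * (w.im : ℂ) * Complex.I_sq

lemma star_dotProduct_niKer_mulVec (M : Matrix (Fin n) (Fin n) ℂ) (x : Fin n → ℂ) :
    star x ⬝ᵥ niKer M *ᵥ x = ((-2 * (star x ⬝ᵥ M *ᵥ x).im : ℝ) : ℂ) := by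
  have hstar : star x ⬝ᵥ Mᴴ *ᵥ x = star (star x ⬝ᵥ M *ᵥ x) := by
    rw [star_dotProduct, star_mulVec, conjTranspose_conjTranspose, dotProduct_mulVec]
  rw [niKer, smul_mulVec, sub_mulVec, dotProduct_smul, dotProduct_sub, hstar, smul_eq_mul,
    I_mul_sub_star]

lemma isHermitian_niKer (M : Matrix (Fin n) (Fin n) ℂ) : (niKer M).IsHermitian := by
  simp [Matrix.IsHermitian, niKer, ← smul_neg]

lemma niKer_posSemidef_iff {M : Matrix (Fin n) (Fin n) ℂ} :
    (niKer M).PosSemidef ↔ ∀ x, (star x ⬝ᵥ M *ᵥ x).im ≤ 0 := by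
  rw [posSemidef_iff_dotProduct_mulVec, and_iff_right (isHermitian_niKer M)]
  refine forall_congr' fun x => ?_
  rw [star_dotProduct_niKer_mulVec, Complex.zero_le_real]
  constructor <;> intro h <;> linarith

lemma niKer_posDef_iff {M : Matrix (Fin n) (Fin n) ℂ} :
    (niKer M).PosDef ↔ ∀ x, x ≠ 0 → (star x ⬝ᵥ M *ᵥ x).im < 0 := by
  rw [posDef_iff_dotProduct_mulVec, and_iff_right (isHermitian_niKer M)]
  refine forall₂_congr fun x hx => ?_
  rw [star_dotProduct_niKer_mulVec, Complex.zero_lt_real]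
  constructor <;> intro h <;> linarith

lemma det_one_sub_mul_ne_zero_iff {m K : Type*} [Fintype m] [DecidableEq m] [Field K]
    {P C : Matrix m m K} : (1 - P * C).det ≠ 0 ↔ ∀ x, P *ᵥ C *ᵥ x = x → x = 0 := by
  rw [Ne, ← exists_mulVec_eq_zero_iff]
  push Not
  refine forall_congr' fun x => ?_
  rw [sub_mulVec, one_mulVec, ← mulVec_mulVec, Ne, Ne, sub_eq_zero, not_imp_not, eq_comm]

theorem det_one_sub_mul_ne_zero_of_niKer {P C : Matrix (Fin n) (Fin n) ℂ}
    (hP : (niKer P).PosDef) (hC : (niKer C).PosSemidef) : (1 - P * C).det ≠ 0 := by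
  rw [det_one_sub_mul_ne_zero_iff]
  intro x hx
  by_contra hx₀
  have hCx : C *ᵥ x ≠ 0 := fun h => hx₀ (by rw [← hx, h, mulVec_zero])
  have hneg := niKer_posDef_iff.1 hP _ hCx
  have hnonpos := niKer_posSemidef_iff.1 hC x
  rw [hx, star_dotProduct, Complex.star_def, Complex.conj_im] at hneg
  linarith

lemma dotProduct_mulVec_self_le {m : Type*} [Fintype m] {P : Matrix m m ℝ} (hP : P.PosSemidef)
    {γ : ℝ} (hγ : 0 < γ) (hle : ∀ x, x ⬝ᵥ P *ᵥ x ≤ γ * (x ⬝ᵥ x)) (y : m → ℝ) :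
    P *ᵥ y ⬝ᵥ P *ᵥ y ≤ γ * (y ⬝ᵥ P *ᵥ y) := by
  have hsymm : y ⬝ᵥ P *ᵥ P *ᵥ y = P *ᵥ y ⬝ᵥ P *ᵥ y := by
    rw [dotProduct_mulVec, ← mulVec_transpose, ← conjTranspose_eq_transpose_of_trivial,
      hP.isHermitian.eq]
  have hnonneg := hP.dotProduct_mulVec_nonneg (γ • y - P *ᵥ y)
  simp only [star_trivial, mulVec_sub, mulVec_smul, sub_dotProduct, dotProduct_sub,
    smul_dotProduct, dotProduct_smul, smul_eq_mul, hsymm] at hnonneg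
  nlinarith [hle (P *ᵥ y)]

theorem det_one_sub_mul_ne_zero_of_gain {m : Type*} [Fintype m] [DecidableEq m]
    {P C : Matrix m m ℝ} (hP : P.PosSemidef) {γ : ℝ} (hγ : 0 < γ)
    (hPle : ∀ x, x ⬝ᵥ P *ᵥ x ≤ γ * (x ⬝ᵥ x))
    (hClt : ∀ x, x ≠ 0 → x ⬝ᵥ C *ᵥ x < γ⁻¹ * (x ⬝ᵥ x)) : (1 - P * C).det ≠ 0 := by
  rw [det_one_sub_mul_ne_zero_iff]
  intro x hx
  by_contra hx₀
  have hle := dotProduct_mulVec_self_le hP hγ hPle (C *ᵥ x)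
  rw [hx, dotProduct_comm (C *ᵥ x)] at hle
  have hlt := mul_lt_mul_of_pos_left (hClt x hx₀) hγ
  rw [mul_inv_cancel_left₀ hγ.ne'] at hlt
  exact hlt.not_ge hle

end Kernel

section Evaluation

lemma evalM_smul {G : Matrix (Fin n) (Fin n) (RatFunc ℝ)} (hG : MemRHinf G) (r : ℝ) {s : ℂ}
    (hs : 0 ≤ s.re) : evalM (r • G) s = (r : ℂ) • evalM G s :=
  Matrix.ext fun i j => evalC_smul (memRHinf_iff.1 hG i j) r hs

lemma evalM_add {G H : Matrix (Fin n) (Fin n) (RatFunc ℝ)} (hG : MemRHinf G) (hH : MemRHinf H)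
    {s : ℂ} (hs : 0 ≤ s.re) : evalM (G + H) s = evalM G s + evalM H s :=
  Matrix.ext fun i j => evalC_add (memRHinf_iff.1 hG i j) (memRHinf_iff.1 hH i j) hs

lemma evalInf_smul {G : Matrix (Fin n) (Fin n) (RatFunc ℝ)} (hG : MemRHinf G) (r : ℝ) :
    evalInf (r • G) = r • evalInf G :=
  Matrix.ext fun i j => atInfinity_smul (memRHinf_iff.1 hG i j) r

lemma evalInf_add {G H : Matrix (Fin n) (Fin n) (RatFunc ℝ)} (hG : MemRHinf G)
    (hH : MemRHinf H) : evalInf (G + H) = evalInf G + evalInf H :=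
  Matrix.ext fun i j => atInfinity_add (memRHinf_iff.1 hG i j) (memRHinf_iff.1 hH i j)

lemma evalM_zero (G : Matrix (Fin n) (Fin n) (RatFunc ℝ)) :
    evalM G 0 = (evalR G 0).map Complex.ofReal := by
  simpa using evalM_ofReal G 0

lemma evalR_zero_smul {G : Matrix (Fin n) (Fin n) (RatFunc ℝ)} (hG : MemRHinf G) (r : ℝ) :
    evalR (r • G) 0 = r • evalR G 0 := by
  apply Matrix.map_injective Complex.ofReal_injective
  simpa [evalM_zero, Matrix.map_smul] using evalM_smul hG r (le_refl (0 : ℂ).re)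

lemma evalR_zero_add {G H : Matrix (Fin n) (Fin n) (RatFunc ℝ)} (hG : MemRHinf G)
    (hH : MemRHinf H) : evalR (G + H) 0 = evalR G 0 + evalR H 0 := by
  apply Matrix.map_injective Complex.ofReal_injective
  simpa [evalM_zero, Matrix.map_add] using evalM_add hG hH (le_refl (0 : ℂ).re)

end Evaluation

section QuadraticForm

lemma diskEval_quadForm {m : Type*} [Fintype m] (G : Matrix m m RHinf) (x : m → ℝ) {z : ℂ}
    (hz : ‖z‖ ≤ 1) :
    diskEval ((algebraMap ℝ RHinf ∘ x) ⬝ᵥ G *ᵥ (algebraMap ℝ RHinf ∘ x) : RHinf) z =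
      (Complex.ofReal ∘ x) ⬝ᵥ diskEvalM (G.map RHinf.val) z *ᵥ (Complex.ofReal ∘ x) := by
  have hx : diskEvalHom z hz ∘ algebraMap ℝ RHinf ∘ x = Complex.ofReal ∘ x :=
    funext fun i => (diskEvalHom z hz).commutes (x i)
  have hmap := RingHom.map_dotProduct (diskEvalHom z hz : RHinf →+* ℂ) (algebraMap ℝ RHinf ∘ x)
    (G *ᵥ (algebraMap ℝ RHinf ∘ x))
  have hmulVec : diskEvalHom z hz ∘ (G *ᵥ (algebraMap ℝ RHinf ∘ x)) =
      diskEvalM (G.map RHinf.val) z *ᵥ (diskEvalHom z hz ∘ algebraMap ℝ RHinf ∘ x) :=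
    funext fun i => RingHom.map_mulVec (diskEvalHom z hz : RHinf →+* ℂ) G _ i
  exact hmap.trans (congrArg₂ _ hx (hmulVec.trans (by rw [hx])))

lemma ofReal_comp_dotProduct_mulVec {m : Type*} [Fintype m] (A : Matrix m m ℝ) (x : m → ℝ) :
    (Complex.ofReal ∘ x) ⬝ᵥ A.map Complex.ofReal *ᵥ (Complex.ofReal ∘ x) =
      ((x ⬝ᵥ A *ᵥ x : ℝ) : ℂ) := by
  simp [dotProduct, mulVec]

theorem dotProduct_evalInf_le_evalR_zero {G : Matrix (Fin n) (Fin n) (RatFunc ℝ)}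
    (hG : MemRHinf G) (hker : ∀ ω : ℝ, 0 < ω → (niKer (evalM G (jw ω))).PosSemidef)
    (x : Fin n → ℝ) : x ⬝ᵥ evalInf G *ᵥ x ≤ x ⬝ᵥ evalR G 0 *ᵥ x := by
  obtain ⟨G, rfl⟩ := hG.exists_map_val
  set g : RHinf := (algebraMap ℝ RHinf ∘ x) ⬝ᵥ G *ᵥ (algebraMap ℝ RHinf ∘ x)
  have heval {s : ℂ} (hs : 0 ≤ s.re) : evalC g s =
      (Complex.ofReal ∘ x) ⬝ᵥ evalM (G.map RHinf.val) s *ᵥ (Complex.ofReal ∘ x) := by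
    obtain ⟨z, hz, hz₁, rfl⟩ := exists_cayley_eq hs
    rw [← diskEval_of_ne_one _ hz₁, ← diskEvalM_of_ne_one _ hz₁, diskEval_quadForm G x hz]
  have hinf : atInfinity g = x ⬝ᵥ evalInf (G.map RHinf.val) *ᵥ x := by
    have := diskEval_quadForm G x (z := 1) norm_one.le
    rw [diskEval_one, diskEvalM_one, ofReal_comp_dotProduct_mulVec] at this
    exact_mod_cast this
  have hzero : (g : RatFunc ℝ).eval (RingHom.id ℝ) 0 =
      x ⬝ᵥ evalR (G.map RHinf.val) 0 *ᵥ x := by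
    have := heval (s := (0 : ℝ)) le_rfl
    rw [evalC_ofReal, evalM_ofReal, ofReal_comp_dotProduct_mulVec] at this
    exact_mod_cast this
  rw [← hinf, ← hzero]
  refine atInfinity_le_eval_zero g.2 fun ω hω => ?_
  have hstar : star (Complex.ofReal ∘ x) = Complex.ofReal ∘ x := funext fun i => by simp
  have him := niKer_posSemidef_iff.1 (hker ω hω) (Complex.ofReal ∘ x)
  rwa [hstar, ← heval (jw_re ω).ge] at him

end QuadraticForm

section BoundedSNI

lemma evalC_det_one_sub_mul {P C : Matrix (Fin n) (Fin n) (RatFunc ℝ)} (hP : MemRHinf P)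
    (hC : MemRHinf C) {s : ℂ} (hs : 0 ≤ s.re) :
    evalC (1 - P * C).det s = (1 - evalM P s * evalM C s).det := by
  obtain ⟨z, hz, hz₁, rfl⟩ := exists_cayley_eq hs
  rw [← diskEval_of_ne_one _ hz₁, diskEval_det_one_sub_mul hP hC hz, diskEvalM_of_ne_one _ hz₁,
    diskEvalM_of_ne_one _ hz₁]

lemma diskEval_ne_zero_of_norm_eq_one {f : RatFunc ℝ} (hinf : atInfinity f ≠ 0)
    (hzero : evalC f 0 ≠ 0) (hpos : ∀ ω : ℝ, 0 < ω → evalC f (jw ω) ≠ 0) {z : ℂ} (hz : ‖z‖ = 1) :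
    diskEval f z ≠ 0 := by
  rcases eq_or_ne z 1 with rfl | hz₁
  · rw [diskEval_one]
    exact_mod_cast hinf
  rw [diskEval_of_ne_one f hz₁, cayley_eq_jw_im hz]
  rcases lt_trichotomy (cayley z).im 0 with hneg | hnull | hp
  · rw [← neg_neg (cayley z).im, ← star_jw, evalC_conj, Ne, map_eq_zero]
    exact hpos _ (neg_pos.2 hneg)
  · simpa [hnull, jw] using hzero
  · exact hpos _ hp

/-- The uncertainty set of the theorem: strictly negative imaginary transfer matrices with
nonnegative instantaneous gain and static gain at most `γ`. -/
structure IsBoundedSNI (γ : ℝ) (P : Matrix (Fin n) (Fin n) (RatFunc ℝ)) : Prop where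
  isSNI : IsSNI P
  evalInf_posSemidef : (evalInf P).PosSemidef
  evalR_zero_le : LoewnerLE (evalR P 0) (γ • 1)

lemma loewnerLE_smul_one_iff {A : Matrix (Fin n) (Fin n) ℝ} {c : ℝ} :
    LoewnerLE A (c • 1) ↔ A.IsHermitian ∧ ∀ x, x ⬝ᵥ A *ᵥ x ≤ c * (x ⬝ᵥ x) := by
  rw [LoewnerLE, posSemidef_iff_dotProduct_mulVec]
  refine and_congr ⟨fun h => ?_, fun h => ?_⟩ (forall_congr' fun x => ?_)
  · simpa using (isHermitian_one.smul (IsSelfAdjoint.all c)).sub h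
  · exact (isHermitian_one.smul (IsSelfAdjoint.all c)).sub h
  · simp [sub_mulVec, smul_mulVec, dotProduct_sub, dotProduct_smul]

lemma LoewnerLT.dotProduct_mulVec_lt {A : Matrix (Fin n) (Fin n) ℝ} {c : ℝ}
    (h : LoewnerLT A (c • 1)) {x : Fin n → ℝ} (hx : x ≠ 0) :
    x ⬝ᵥ A *ᵥ x < c * (x ⬝ᵥ x) := by
  simpa [sub_mulVec, smul_mulVec, dotProduct_sub, dotProduct_smul] using
    PosDef.dotProduct_mulVec_pos h hx

lemma IsBoundedSNI.smul {γ : ℝ} {P : Matrix (Fin n) (Fin n) (RatFunc ℝ)} (hP : IsBoundedSNI γ P)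
    (hγ : 0 < γ) {r : ℝ} (hr : 0 < r) (hr₁ : r ≤ 1) : IsBoundedSNI γ (r • P) where
  isSNI := ⟨hP.isSNI.1.smul r, fun ω hω => by
    rw [evalM_smul hP.isSNI.1 r (jw_re ω).ge]
    refine niKer_posDef_iff.2 fun x hx => ?_
    have := niKer_posDef_iff.1 (hP.isSNI.2 ω hω) x hx
    simpa [smul_mulVec, dotProduct_smul] using mul_neg_of_pos_of_neg hr this⟩
  evalInf_posSemidef := by
    rw [evalInf_smul hP.isSNI.1]
    exact hP.evalInf_posSemidef.smul hr.le
  evalR_zero_le := by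
    obtain ⟨hherm, hle⟩ := loewnerLE_smul_one_iff.1 hP.evalR_zero_le
    rw [evalR_zero_smul hP.isSNI.1, loewnerLE_smul_one_iff]
    refine ⟨hherm.smul (IsSelfAdjoint.all r), fun x => ?_⟩
    rw [smul_mulVec, dotProduct_smul, smul_eq_mul]
    have hx : 0 ≤ γ * (x ⬝ᵥ x) := mul_nonneg hγ.le (dotProduct_star_self_nonneg x)
    exact (mul_le_mul_of_nonneg_left (hle x) hr.le).trans (mul_le_of_le_one_left hx hr₁)

end BoundedSNI

section Sufficiency

variable {P C : Matrix (Fin n) (Fin n) (RatFunc ℝ)} {γ : ℝ}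

lemma IsBoundedSNI.diskEval_det_ne_zero (hP : IsBoundedSNI γ P) (hC : MemRHinf C) (hγ : 0 < γ)
    (hker : ∀ ω : ℝ, 0 < ω → (niKer (evalM C (jw ω))).PosSemidef)
    (hC₀ : LoewnerLT (evalR C 0) (γ⁻¹ • 1)) {z : ℂ} (hz : ‖z‖ = 1) :
    diskEval (1 - P * C).det z ≠ 0 := by
  have hPmem : MemRHinf P := hP.isSNI.1
  have hPgain := dotProduct_evalInf_le_evalR_zero hPmem fun ω hω => (hP.isSNI.2 ω hω).posSemidef
  have hCgain := dotProduct_evalInf_le_evalR_zero hC hker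
  obtain ⟨hherm, hPle⟩ := loewnerLE_smul_one_iff.1 hP.evalR_zero_le
  have hP₀ : (evalR P 0).PosSemidef := .of_dotProduct_mulVec_nonneg hherm fun x =>
    (hP.evalInf_posSemidef.dotProduct_mulVec_nonneg x).trans (hPgain x)
  have hreal {A B : Matrix (Fin n) (Fin n) ℝ} (h : (1 - A * B).det ≠ 0) :
      (1 - A.map Complex.ofReal * B.map Complex.ofReal).det ≠ 0 := by
    have hdet := map_det_one_sub_mul Complex.ofRealHom A B
    exact hdet ▸ Complex.ofReal_ne_zero.2 h
  refine diskEval_ne_zero_of_norm_eq_one ?_ ?_ (fun ω hω => ?_) hz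
  · have h := hreal (det_one_sub_mul_ne_zero_of_gain hP.evalInf_posSemidef hγ
      (fun x => (hPgain x).trans (hPle x))
      fun x hx => (hCgain x).trans_lt (hC₀.dotProduct_mulVec_lt hx))
    rw [← diskEvalM_one, ← diskEvalM_one, ← diskEval_det_one_sub_mul hPmem hC norm_one.le,
      diskEval_one] at h
    exact_mod_cast h
  · rw [evalC_det_one_sub_mul hPmem hC le_rfl, evalM_zero, evalM_zero]
    exact hreal (det_one_sub_mul_ne_zero_of_gain hP₀ hγ hPle fun x => hC₀.dotProduct_mulVec_lt)
  · rw [evalC_det_one_sub_mul hPmem hC (jw_re ω).ge]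
    exact det_one_sub_mul_ne_zero_of_niKer (hP.isSNI.2 ω hω) (hker ω hω)

lemma continuousOn_diskEval_det_smul (hP : MemRHinf P) (hC : MemRHinf C) :
    ContinuousOn (Function.uncurry fun (r : ℝ) z => diskEval (1 - (r • P) * C).det z)
      (Set.univ ×ˢ Metric.closedBall 0 1) := by
  have hmaps : Set.MapsTo Prod.snd ((Set.univ : Set ℝ) ×ˢ Metric.closedBall (0 : ℂ) 1)
      (Metric.closedBall 0 1) := fun q hq => hq.2
  have hcont : ContinuousOn (fun q : ℝ × ℂ =>
      (1 - ((q.1 : ℂ) • diskEvalM P q.2) * diskEvalM C q.2).det)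
      (Set.univ ×ˢ Metric.closedBall 0 1) := by
    refine Continuous.matrix_det continuous_id |>.comp_continuousOn (continuousOn_const.sub ?_)
    exact ((Complex.continuous_ofReal.comp continuous_fst).continuousOn.smul
      ((continuousOn_diskEvalM hP).comp continuousOn_snd hmaps)).mul
      ((continuousOn_diskEvalM hC).comp continuousOn_snd hmaps)
  refine hcont.congr fun q hq => ?_
  have hz : ‖q.2‖ ≤ 1 := by simpa using hq.2
  rw [Function.uncurry, diskEval_det_one_sub_mul (hP.smul _) hC hz, diskEvalM_smul hP _ hz]

-- Scaling `P` down to `0` never creates a zero of `det (1 - rPC)` on the circle.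
theorem IsBoundedSNI.feedbackStable (hP : IsBoundedSNI γ P) (hC : MemRHinf C) (hγ : 0 < γ)
    (hker : ∀ ω : ℝ, 0 < ω → (niKer (evalM C (jw ω))).PosSemidef)
    (hC₀ : LoewnerLT (evalR C 0) (γ⁻¹ • 1)) : FeedbackStable P C := by
  have hclosure : closure (Metric.ball (0 : ℂ) 1) = Metric.closedBall 0 1 :=
    closure_ball _ one_ne_zero
  have hzero (z : ℂ) : diskEval (1 - ((0 : ℝ) • P) * C).det z ≠ 0 := by
    have := diskEval_algebraMap 1 z
    simp_all
  have hiff := ne_zero_on_closure_iff_of_homotopy (s := Set.Icc (0 : ℝ) 1) isPreconnected_Icc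
    Metric.isBounded_ball (F := fun r z => diskEval (1 - (r • P) * C).det z)
    (hclosure ▸ (continuousOn_diskEval_det_smul hP.isSNI.1 hC).mono
      (Set.prod_mono_left (Set.subset_univ _)))
    (fun r _ => diffContOnCl_diskEval ((hP.isSNI.1.smul r).det_one_sub_mul_mem hC))
    (fun r hr z hz => ?_) (Set.left_mem_Icc.2 zero_le_one) (Set.right_mem_Icc.2 zero_le_one)
  · rw [feedbackStable_iff_forall_diskEval hP.isSNI.1 hC]
    simpa [hclosure] using hiff.1 fun z _ => hzero z
  · rcases hr.1.eq_or_lt with rfl | hpos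
    · exact hzero z
    · exact (hP.smul hγ hpos hr.2).diskEval_det_ne_zero hC hγ hker hC₀
        (by simpa [frontier_ball] using hz)

end Sufficiency

section Biquad

lemma aeval_quadratic (a b c : ℝ) (s : ℂ) :
    aeval s (C a * X ^ 2 + C b * X + C c) = a * s ^ 2 + b * s + c := by
  simp

lemma isHurwitz_quadratic {a b c : ℝ} (ha : 0 < a) (hb : 0 < b) (hc : 0 < c) :
    IsHurwitz (C a * X ^ 2 + C b * X + C c) := by
  intro s hs hzero
  rw [aeval_quadratic] at hzero
  have him : s.im * (2 * a * s.re + b) = 0 := by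
    have := congrArg Complex.im hzero
    simp only [pow_two, Complex.add_im, Complex.mul_im, Complex.mul_re, Complex.ofReal_re,
      Complex.ofReal_im, Complex.zero_im] at this
    linarith
  have hre : a * (s.re ^ 2 - s.im ^ 2) + b * s.re + c = 0 := by
    have := congrArg Complex.re hzero
    simp only [pow_two, Complex.add_re, Complex.mul_re, Complex.mul_im, Complex.ofReal_re,
      Complex.ofReal_im, Complex.zero_re] at this
    linarith
  have him₀ : s.im = 0 := (mul_eq_zero.1 him).resolve_right (by positivity)
  rw [him₀] at hre
  have : 0 ≤ a * s.re ^ 2 + b * s.re := by positivity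
  linarith

lemma atInfinity_div {p q : ℝ[X]} {N : ℕ} (hq : IsHurwitz q) (hp : p.natDegree ≤ N)
    (hqdeg : q.natDegree ≤ N) (hqN : q.coeff N ≠ 0) :
    atInfinity (algebraMap _ (RatFunc ℝ) p / algebraMap _ _ q) = p.coeff N / q.coeff N := by
  have hmem : algebraMap _ (RatFunc ℝ) p / algebraMap _ _ q ∈ RHinf :=
    ⟨p, q, hq, (degree_le_of_natDegree_le hp).trans (le_degree_of_ne_zero hqN), rfl⟩
  have hlim := ((tendsto_aeval_div_aeval_cobounded hp hqdeg hqN).comp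
    (RCLike.tendsto_ofReal_atTop_cobounded ℂ)).congr' <|
    (eventually_ge_atTop 0).mono fun (x : ℝ) hx => (evalC_div (hq (x : ℂ) (by simpa using hx))).symm
  exact_mod_cast tendsto_nhds_unique (tendsto_evalC_ofReal_atTop hmem) hlim

/-- The second-order transfer matrix `(s² E + s B + A) / (s² + a s + c)`. -/
def biquad (E B A : Matrix (Fin n) (Fin n) ℝ) (a c : ℝ) : Matrix (Fin n) (Fin n) (RatFunc ℝ) :=
  Matrix.of fun i j => algebraMap _ _ (C (E i j) * X ^ 2 + C (B i j) * X + C (A i j)) /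
    algebraMap _ _ (C 1 * X ^ 2 + C a * X + C c)

variable {E B A : Matrix (Fin n) (Fin n) ℝ} {a c : ℝ}

lemma memRHinf_biquad (ha : 0 < a) (hc : 0 < c) : MemRHinf (biquad E B A a c) :=
  memRHinf_iff.2 fun _ _ => ⟨_, _, isHurwitz_quadratic one_pos ha hc,
    degree_quadratic_le.trans (degree_quadratic one_ne_zero).ge, rfl⟩

lemma evalM_biquad (ha : 0 < a) (hc : 0 < c) {s : ℂ} (hs : 0 ≤ s.re) :
    evalM (biquad E B A a c) s = (s ^ 2 + a * s + c)⁻¹ •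
      (s ^ 2 • E.map Complex.ofReal + s • B.map Complex.ofReal + A.map Complex.ofReal) := by
  ext i j
  have h := evalC_div (p := C (E i j) * X ^ 2 + C (B i j) * X + C (A i j))
    (isHurwitz_quadratic one_pos ha hc s hs)
  rw [aeval_quadratic, aeval_quadratic, Complex.ofReal_one, one_mul] at h
  simp only [evalM, biquad, Matrix.of_apply, h, Matrix.smul_apply, Matrix.add_apply,
    Matrix.map_apply, smul_eq_mul]
  ring

lemma evalInf_biquad (ha : 0 < a) (hc : 0 < c) : evalInf (biquad E B A a c) = E := by
  ext i j
  have h := atInfinity_div (N := 2) (p := C (E i j) * X ^ 2 + C (B i j) * X + C (A i j))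
    (isHurwitz_quadratic one_pos ha hc) natDegree_quadratic_le natDegree_quadratic_le (by simp)
  simpa [biquad, evalInf] using h

lemma evalR_zero_biquad (ha : 0 < a) (hc : 0 < c) :
    evalR (biquad E B A a c) 0 = c⁻¹ • A := by
  apply Matrix.map_injective Complex.ofReal_injective
  dsimp only
  rw [← evalM_zero, evalM_biquad ha hc le_rfl]
  ext i j
  simp

end Biquad

section Perturbations

lemma niKer_add (M N : Matrix (Fin n) (Fin n) ℂ) : niKer (M + N) = niKer M + niKer N := by
  simp only [niKer, conjTranspose_add, ← smul_add]
  congr 1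
  abel

lemma niKer_ofReal_smul (r : ℝ) (M : Matrix (Fin n) (Fin n) ℂ) :
    niKer ((r : ℂ) • M) = r • niKer M := by
  rw [niKer, niKer, conjTranspose_smul, Complex.star_def, Complex.conj_ofReal, ← smul_sub,
    smul_comm, Complex.coe_smul]

lemma niKer_smul_of_isHermitian {H : Matrix (Fin n) (Fin n) ℂ} (hH : H.IsHermitian) (w : ℂ) :
    niKer (w • H) = (-2 * w.im) • H := by
  rw [niKer, conjTranspose_smul, hH.eq, ← sub_smul, smul_smul, I_mul_sub_star, Complex.coe_smul]

lemma niKer_smul_posSemidef {H : Matrix (Fin n) (Fin n) ℂ} (hH : H.PosSemidef) {w : ℂ}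
    (hw : w.im ≤ 0) : (niKer (w • H)).PosSemidef := by
  rw [niKer_smul_of_isHermitian hH.isHermitian]
  exact hH.smul (by linarith)

lemma niKer_smul_posDef {H : Matrix (Fin n) (Fin n) ℂ} (hH : H.PosDef) {w : ℂ}
    (hw : w.im < 0) : (niKer (w • H)).PosDef := by
  rw [niKer_smul_of_isHermitian hH.isHermitian]
  exact hH.smul (by linarith)

lemma jw_quadratic (ω a c : ℝ) :
    jw ω ^ 2 + a * jw ω + c = ((c - ω ^ 2 : ℝ) : ℂ) + (a * ω : ℝ) * Complex.I := by
  simp only [jw, mul_pow, Complex.I_sq]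
  push_cast
  ring

lemma inv_jw_quadratic_im_neg {ω a : ℝ} (hω : 0 < ω) (ha : 0 < a) (c : ℝ) :
    (jw ω ^ 2 + a * jw ω + c)⁻¹.im < 0 := by
  have him : 0 < (jw ω ^ 2 + a * jw ω + c).im := by
    rw [jw_quadratic, Complex.add_im, Complex.ofReal_im, Complex.im_ofReal_mul, Complex.I_im,
      mul_one, zero_add]
    positivity
  rw [Complex.inv_im]
  exact div_neg_of_neg_of_pos (neg_neg_of_pos him)
    (Complex.normSq_pos.2 fun h => him.ne' (by rw [h, Complex.zero_im]))

/-- The strictly negative imaginary transfer matrix `(1 + 1 / (s² + s + 1)) I`, a multiple of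
which makes every other perturbation strict. -/
def scalarFilter (n : ℕ) : Matrix (Fin n) (Fin n) (RatFunc ℝ) := biquad 1 1 ((2 : ℝ) • 1) 1 1

lemma memRHinf_scalarFilter : MemRHinf (scalarFilter n) := memRHinf_biquad one_pos one_pos

lemma evalM_scalarFilter {s : ℂ} (hs : 0 ≤ s.re) :
    evalM (scalarFilter n) s = (1 + (s ^ 2 + s + 1)⁻¹) • 1 := by
  have hne := isHurwitz_quadratic one_pos one_pos one_pos s hs
  simp only [aeval_quadratic, Complex.ofReal_one, one_mul] at hne
  have hone : (1 : Matrix (Fin n) (Fin n) ℝ).map Complex.ofReal = 1 := by simp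
  have htwo : ((2 : ℝ) • (1 : Matrix (Fin n) (Fin n) ℝ)).map Complex.ofReal = (2 : ℂ) • 1 := by
    ext i j
    simp [Matrix.one_apply, apply_ite]
  rw [scalarFilter, evalM_biquad one_pos one_pos hs, hone, htwo, ← add_smul, ← add_smul,
    smul_smul, Complex.ofReal_one, one_mul]
  congr 1
  linear_combination inv_mul_cancel₀ hne

lemma niKer_scalarFilter_posDef {ω : ℝ} (hω : 0 < ω) :
    (niKer (evalM (scalarFilter n) (jw ω))).PosDef := by
  rw [evalM_scalarFilter (jw_re ω).ge]
  refine niKer_smul_posDef PosDef.one ?_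
  simpa using inv_jw_quadratic_im_neg hω one_pos 1

lemma evalInf_scalarFilter : evalInf (scalarFilter n) = 1 := evalInf_biquad one_pos one_pos

lemma evalR_zero_scalarFilter : evalR (scalarFilter n) 0 = (2 : ℝ) • 1 := by
  rw [scalarFilter, evalR_zero_biquad one_pos one_pos, inv_one, one_smul]

/-- A second-order transfer matrix with denominator `s² + a s + c` whose numerator takes the value
`u u*` at the frequency `ω₀` and is positive semidefinite at all frequencies. -/
def resonator (u : Fin n → ℂ) (ω₀ a c : ℝ) : Matrix (Fin n) (Fin n) (RatFunc ℝ) :=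
  biquad (-(2 * ω₀ ^ 2)⁻¹ • (vecMulVec u (star u)).map Complex.re)
    (ω₀⁻¹ • (vecMulVec u (star u)).map Complex.im)
    ((2 : ℝ)⁻¹ • (vecMulVec u (star u)).map Complex.re) a c

variable {u : Fin n → ℂ} {ω₀ a c : ℝ}

lemma jw_quadratic_re_im (hω₀ : ω₀ ≠ 0) (ω : ℝ) (z : ℂ) :
    jw ω ^ 2 * (-(2 * ω₀ ^ 2)⁻¹ * z.re : ℝ) + jw ω * (ω₀⁻¹ * z.im : ℝ) + (2⁻¹ * z.re : ℝ) =
      ((ω + ω₀) ^ 2 / (4 * ω₀ ^ 2) : ℝ) * z + ((ω - ω₀) ^ 2 / (4 * ω₀ ^ 2) : ℝ) * star z := by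
  have hω₀' : (ω₀ : ℂ) ≠ 0 := Complex.ofReal_ne_zero.2 hω₀
  have hsq : jw ω ^ 2 = -(ω : ℂ) ^ 2 := by rw [jw, mul_pow, Complex.I_sq, neg_one_mul]
  have hstar : star z = z.re - z.im * Complex.I := RCLike.conj_eq_re_sub_im z
  rw [hsq, hstar, jw]
  nth_rw 4 [← Complex.re_add_im z]
  push_cast
  field_simp
  ring

lemma evalM_resonator_jw (hω₀ : ω₀ ≠ 0) (ha : 0 < a) (hc : 0 < c) (ω : ℝ) :
    evalM (resonator u ω₀ a c) (jw ω) = (jw ω ^ 2 + a * jw ω + c)⁻¹ •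
      (((ω + ω₀) ^ 2 / (4 * ω₀ ^ 2)) • vecMulVec u (star u) +
        ((ω - ω₀) ^ 2 / (4 * ω₀ ^ 2)) • vecMulVec (star u) u) := by
  rw [resonator, evalM_biquad ha hc (jw_re ω).ge]
  congr 1
  ext i j
  have hstar : vecMulVec (star u) u i j = star (vecMulVec u (star u) i j) := by
    simp [vecMulVec_apply]
  have hentry := jw_quadratic_re_im hω₀ ω (vecMulVec u (star u) i j)
  rw [← hstar] at hentry
  simpa only [Matrix.add_apply, Matrix.smul_apply, Matrix.map_apply, Complex.real_smul,
    smul_eq_mul] using hentry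

lemma evalM_resonator_jw_self (hω₀ : ω₀ ≠ 0) (ha : 0 < a) (hc : 0 < c) :
    evalM (resonator u ω₀ a c) (jw ω₀) =
      (jw ω₀ ^ 2 + a * jw ω₀ + c)⁻¹ • vecMulVec u (star u) := by
  have hcoeff : (ω₀ + ω₀) ^ 2 / (4 * ω₀ ^ 2) = 1 := by
    field_simp
    norm_num
  rw [evalM_resonator_jw hω₀ ha hc, hcoeff, sub_self]
  simp

lemma niKer_resonator_posSemidef (hω₀ : ω₀ ≠ 0) (ha : 0 < a) (hc : 0 < c) {ω : ℝ} (hω : 0 < ω) :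
    (niKer (evalM (resonator u ω₀ a c) (jw ω))).PosSemidef := by
  rw [evalM_resonator_jw hω₀ ha hc]
  refine niKer_smul_posSemidef (.add ?_ ?_) (inv_jw_quadratic_im_neg hω ha c).le
  · exact (posSemidef_vecMulVec_self_star u).smul (by positivity)
  · exact (posSemidef_vecMulVec_star_self u).smul (by positivity)

lemma dotProduct_vecMulVec_self_le {m : Type*} [Fintype m] (v x : m → ℝ) :
    x ⬝ᵥ vecMulVec v v *ᵥ x ≤ v ⬝ᵥ v * (x ⬝ᵥ x) := by
  rw [vecMulVec_mulVec, dotProduct_smul, dotProduct_comm x v]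
  simpa [dotProduct, pow_two] using Finset.sum_mul_sq_le_sq_mul_sq Finset.univ v x

lemma loewnerLE_map_re_vecMulVec (u : Fin n → ℂ) :
    LoewnerLE ((vecMulVec u (star u)).map Complex.re) ((∑ i, ‖u i‖ ^ 2) • 1) := by
  have hsplit : (vecMulVec u (star u)).map Complex.re =
      vecMulVec (Complex.re ∘ u) (Complex.re ∘ u) +
        vecMulVec (Complex.im ∘ u) (Complex.im ∘ u) := by
    ext i j
    simp [vecMulVec_apply]
  have hnorm : ∑ i, ‖u i‖ ^ 2 = (Complex.re ∘ u) ⬝ᵥ (Complex.re ∘ u) +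
      (Complex.im ∘ u) ⬝ᵥ (Complex.im ∘ u) := by
    simp [dotProduct, ← Finset.sum_add_distrib, Complex.sq_norm, Complex.normSq_apply]
  rw [loewnerLE_smul_one_iff, hsplit, hnorm]
  refine ⟨(posSemidef_vecMulVec_self_star _).isHermitian.add
    (posSemidef_vecMulVec_self_star _).isHermitian, fun x => ?_⟩
  rw [add_mulVec, dotProduct_add, add_mul]
  exact add_le_add (dotProduct_vecMulVec_self_le _ x) (dotProduct_vecMulVec_self_le _ x)

lemma loewnerLE_smul_map_re_vecMulVec (u : Fin n → ℂ) {r t : ℝ} (hr : 0 ≤ r)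
    (hrt : r * ∑ i, ‖u i‖ ^ 2 ≤ t) :
    LoewnerLE (r • (vecMulVec u (star u)).map Complex.re) (t • 1) := by
  obtain ⟨hherm, hle⟩ := loewnerLE_smul_one_iff.1 (loewnerLE_map_re_vecMulVec u)
  refine loewnerLE_smul_one_iff.2 ⟨hherm.smul (IsSelfAdjoint.all r), fun x => ?_⟩
  rw [smul_mulVec, dotProduct_smul, smul_eq_mul]
  calc r * (x ⬝ᵥ (vecMulVec u (star u)).map Complex.re *ᵥ x)
      ≤ r * ((∑ i, ‖u i‖ ^ 2) * (x ⬝ᵥ x)) := mul_le_mul_of_nonneg_left (hle x) hr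
    _ = (r * ∑ i, ‖u i‖ ^ 2) * (x ⬝ᵥ x) := (mul_assoc _ _ _).symm
    _ ≤ t * (x ⬝ᵥ x) := mul_le_mul_of_nonneg_right hrt (dotProduct_star_self_nonneg x)

lemma isSNI_scalarFilter_add_resonator {κ k : ℝ} (hκ : 0 < κ) (hk : 0 ≤ k) (hω₀ : ω₀ ≠ 0)
    (ha : 0 < a) (hc : 0 < c) : IsSNI (κ • scalarFilter n + k • resonator u ω₀ a c) := by
  have hfilter := memRHinf_scalarFilter (n := n)
  have hres : MemRHinf (resonator u ω₀ a c) := memRHinf_biquad ha hc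
  refine ⟨(hfilter.smul κ).add (hres.smul k), fun ω hω => ?_⟩
  rw [evalM_add (hfilter.smul κ) (hres.smul k) (jw_re ω).ge, evalM_smul hfilter _ (jw_re ω).ge,
    evalM_smul hres _ (jw_re ω).ge, niKer_add, niKer_ofReal_smul, niKer_ofReal_smul]
  exact ((niKer_scalarFilter_posDef hω).smul hκ).add_posSemidef
    ((niKer_resonator_posSemidef hω₀ ha hc hω).smul hk)

lemma isBoundedSNI_scalarFilter_add_resonator {γ κ k : ℝ} (hκ : 0 < κ) (hk : 0 ≤ k)
    (hω₀ : ω₀ ≠ 0) (ha : 0 < a) (hc : 0 < c)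
    (hinf : k * (2 * ω₀ ^ 2)⁻¹ * ∑ i, ‖u i‖ ^ 2 ≤ κ)
    (hzero : 2 * κ + k * c⁻¹ * 2⁻¹ * ∑ i, ‖u i‖ ^ 2 ≤ γ) :
    IsBoundedSNI γ (κ • scalarFilter n + k • resonator u ω₀ a c) where
  isSNI := isSNI_scalarFilter_add_resonator hκ hk hω₀ ha hc
  evalInf_posSemidef := by
    have hfilter := memRHinf_scalarFilter (n := n)
    have hres : MemRHinf (resonator u ω₀ a c) := memRHinf_biquad ha hc
    have hle := loewnerLE_smul_map_re_vecMulVec u (by positivity) hinf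
    rw [evalInf_add (hfilter.smul κ) (hres.smul k), evalInf_smul hfilter, evalInf_smul hres,
      evalInf_scalarFilter, resonator, evalInf_biquad ha hc, smul_smul, mul_neg, neg_smul,
      ← sub_eq_add_neg]
    exact hle
  evalR_zero_le := by
    have hfilter := memRHinf_scalarFilter (n := n)
    have hres : MemRHinf (resonator u ω₀ a c) := memRHinf_biquad ha hc
    have hle := loewnerLE_smul_map_re_vecMulVec u (by positivity) (le_sub_iff_add_le'.2 hzero)
    rw [LoewnerLE, sub_smul, sub_sub] at hle
    rw [evalR_zero_add (hfilter.smul κ) (hres.smul k), evalR_zero_smul hfilter,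
      evalR_zero_smul hres, evalR_zero_scalarFilter, resonator, evalR_zero_biquad ha hc, smul_smul,
      smul_smul, smul_smul, mul_comm κ]
    exact hle

lemma evalM_scalarFilter_add_resonator_jw {κ k : ℝ} {w : ℂ} (hω₀ : ω₀ ≠ 0) (hk : k ≠ 0)
    (ha : 0 < k * w.im / ω₀) (hc : 0 < ω₀ ^ 2 + k * w.re) :
    evalM (κ • scalarFilter n + k • resonator u ω₀ (k * w.im / ω₀) (ω₀ ^ 2 + k * w.re)) (jw ω₀) =
      (κ : ℂ) • (1 + (jw ω₀ ^ 2 + jw ω₀ + 1)⁻¹) • 1 + w⁻¹ • vecMulVec u (star u) := by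
  have hden : jw ω₀ ^ 2 + (k * w.im / ω₀ : ℝ) * jw ω₀ + (ω₀ ^ 2 + k * w.re : ℝ) = k * w := by
    rw [jw_quadratic, div_mul_cancel₀ _ hω₀, add_sub_cancel_left]
    nth_rw 3 [← Complex.re_add_im w]
    push_cast
    ring
  have hfilter := memRHinf_scalarFilter (n := n)
  have hres : MemRHinf (resonator u ω₀ _ _) := memRHinf_biquad ha hc
  rw [evalM_add (hfilter.smul κ) (hres.smul k) (jw_re ω₀).ge, evalM_smul hfilter _ (jw_re ω₀).ge,
    evalM_smul hres _ (jw_re ω₀).ge, evalM_scalarFilter (jw_re ω₀).ge,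
    evalM_resonator_jw_self hω₀ ha hc, hden, smul_smul (k : ℂ), mul_inv,
    mul_inv_cancel_left₀ (Complex.ofReal_ne_zero.2 hk)]

-- For small `k` the resonator `k / (s² + a s + c)` with `a = k w.im / ω₀` and
-- `c = ω₀² + k w.re` has the prescribed value `w⁻¹` at `jω₀` and arbitrarily small gains at `0`
-- and `∞`.
lemma exists_isBoundedSNI_evalM_eq {γ κ : ℝ} (hκ : 0 < κ) (hκγ : 2 * κ < γ) (hω₀ : 0 < ω₀)
    (u : Fin n → ℂ) {w : ℂ} (hw : 0 < w.im) :
    ∃ P, IsBoundedSNI γ P ∧ evalM P (jw ω₀) =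
      (κ : ℂ) • (1 + (jw ω₀ ^ 2 + jw ω₀ + 1)⁻¹) • (1 : Matrix (Fin n) (Fin n) ℂ) +
        w⁻¹ • vecMulVec u (star u) := by
  have hc_pos : ∀ᶠ k in 𝓝[>] (0 : ℝ), 0 < ω₀ ^ 2 + k * w.re := by
    refine nhdsWithin_le_nhds <| ContinuousAt.eventually_lt (by fun_prop) (by fun_prop) ?_
    simpa using pow_pos hω₀ 2
  have hinf : ∀ᶠ k in 𝓝[>] (0 : ℝ), k * (2 * ω₀ ^ 2)⁻¹ * ∑ i, ‖u i‖ ^ 2 < κ :=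
    nhdsWithin_le_nhds <| ContinuousAt.eventually_lt (by fun_prop) (by fun_prop) (by simpa using hκ)
  have hzero : ∀ᶠ k in 𝓝[>] (0 : ℝ),
      2 * κ + k * (ω₀ ^ 2 + k * w.re)⁻¹ * 2⁻¹ * ∑ i, ‖u i‖ ^ 2 < γ :=
    nhdsWithin_le_nhds <| ContinuousAt.eventually_lt
      (by fun_prop (disch := simpa using hω₀.ne')) (by fun_prop) (by simpa using hκγ)
  obtain ⟨k, hc, hinf, hzero, hk : 0 < k⟩ :=
    (hc_pos.and (hinf.and (hzero.and self_mem_nhdsWithin))).exists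
  have ha : 0 < k * w.im / ω₀ := by positivity
  refine ⟨_, isBoundedSNI_scalarFilter_add_resonator (u := u) hκ hk.le hω₀.ne' ha hc hinf.le
    hzero.le, evalM_scalarFilter_add_resonator_jw hω₀.ne' hk.ne' ha hc⟩

-- With `v := 1 + 1 / (1 - ω₀² + jω₀)` and `u := x - κ v y`, the matrix `κ v I + u u* / (u* y)`
-- maps `y` to `x`.
theorem exists_isBoundedSNI_evalM_mulVec_eq {γ : ℝ} (hγ : 0 < γ) (hω₀ : 0 < ω₀)
    {x y : Fin n → ℂ} (hxy : 0 < (star x ⬝ᵥ y).im) :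
    ∃ P, IsBoundedSNI γ P ∧ evalM P (jw ω₀) *ᵥ y = x := by
  set v : ℂ := 1 + (jw ω₀ ^ 2 + jw ω₀ + 1)⁻¹ with hv
  have him : ∀ᶠ κ : ℝ in 𝓝[>] 0, 0 < (star (x - ((κ : ℂ) * v) • y) ⬝ᵥ y).im := by
    refine nhdsWithin_le_nhds <| ContinuousAt.eventually_lt (by fun_prop) ?_ (by simpa using hxy)
    exact (Complex.continuous_im.comp (by fun_prop)).continuousAt
  have hκγ : ∀ᶠ κ : ℝ in 𝓝[>] 0, 2 * κ < γ :=
    nhdsWithin_le_nhds <| ContinuousAt.eventually_lt (by fun_prop) (by fun_prop) (by simpa using hγ)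
  obtain ⟨κ, him, hκγ, hκ : 0 < κ⟩ := (him.and (hκγ.and self_mem_nhdsWithin)).exists
  obtain ⟨P, hP, hPeval⟩ := exists_isBoundedSNI_evalM_eq hκ hκγ hω₀
    (x - ((κ : ℂ) * v) • y) him
  refine ⟨P, hP, ?_⟩
  have hne : star (x - ((κ : ℂ) * v) • y) ⬝ᵥ y ≠ 0 := fun h => by
    rw [h] at him
    exact him.false
  rw [hPeval, ← hv, smul_smul, add_mulVec, smul_mulVec, one_mulVec, smul_mulVec, vecMulVec_mulVec,
    op_smul_eq_smul, inv_smul_smul₀ hne, add_sub_cancel]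

theorem exists_isBoundedSNI_evalR_zero_eq {γ κ : ℝ} (hκ : 0 < κ) (hκγ : κ ≤ γ) :
    ∃ P : Matrix (Fin n) (Fin n) (RatFunc ℝ), IsBoundedSNI γ P ∧ evalR P 0 = κ • 1 := by
  have hP := isBoundedSNI_scalarFilter_add_resonator (n := n) (u := 0) (γ := γ) (half_pos hκ)
    le_rfl one_ne_zero one_pos one_pos (by simpa using (half_pos hκ).le)
    (by simpa [mul_div_cancel₀] using hκγ)
  refine ⟨_, hP, ?_⟩
  rw [zero_smul, add_zero, evalR_zero_smul memRHinf_scalarFilter, evalR_zero_scalarFilter,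
    smul_smul, div_mul_cancel₀ _ two_ne_zero]

end Perturbations

section Necessity

variable {P C : Matrix (Fin n) (Fin n) (RatFunc ℝ)}

lemma FeedbackStable.eq_zero_of_evalM_mulVec_eq (h : FeedbackStable P C) (hP : MemRHinf P)
    (hC : MemRHinf C) {s : ℂ} (hs : 0 ≤ s.re) {x : Fin n → ℂ}
    (hx : evalM P s *ᵥ evalM C s *ᵥ x = x) : x = 0 := by
  obtain ⟨z, hz, hz₁, rfl⟩ := exists_cayley_eq hs
  have hdet := (feedbackStable_iff_forall_diskEval hP hC).1 h z hz
  rw [diskEval_of_ne_one _ hz₁, evalC_det_one_sub_mul hP hC hs] at hdet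
  exact det_one_sub_mul_ne_zero_iff.1 hdet x hx

lemma FeedbackStable.eq_zero_of_evalR_mulVec_eq (h : FeedbackStable P C) (hP : MemRHinf P)
    (hC : MemRHinf C) {v : Fin n → ℝ} (hv : evalR P 0 *ᵥ evalR C 0 *ᵥ v = v) : v = 0 := by
  have hmap (A : Matrix (Fin n) (Fin n) ℝ) (x : Fin n → ℝ) :
      A.map Complex.ofReal *ᵥ (Complex.ofReal ∘ x) = Complex.ofReal ∘ (A *ᵥ x) :=
    funext fun i => (RingHom.map_mulVec Complex.ofRealHom A x i).symm
  have hzero := h.eq_zero_of_evalM_mulVec_eq hP hC (s := 0) le_rfl (x := Complex.ofReal ∘ v)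
    (by rw [evalM_zero, evalM_zero, hmap, hmap, hv])
  exact funext fun i => Complex.ofReal_eq_zero.1 (congrFun hzero i)

theorem niKer_posSemidef_of_forall_feedbackStable (hC : MemRHinf C) {γ : ℝ} (hγ : 0 < γ)
    (H : ∀ P, IsBoundedSNI γ P → FeedbackStable P C) {ω : ℝ} (hω : 0 < ω) :
    (niKer (evalM C (jw ω))).PosSemidef := by
  rw [niKer_posSemidef_iff]
  intro x
  by_contra! hx
  obtain ⟨P, hP, hPx⟩ := exists_isBoundedSNI_evalM_mulVec_eq hγ hω hx
  have hx₀ := (H P hP).eq_zero_of_evalM_mulVec_eq hP.isSNI.1 hC (jw_re ω).ge hPx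
  simp [hx₀] at hx

lemma isHermitian_of_niKer_map_ofReal_posSemidef {A : Matrix (Fin n) (Fin n) ℝ}
    (hA : (niKer (A.map Complex.ofReal)).PosSemidef) : A.IsHermitian := by
  have hdiag (i : Fin n) : niKer (A.map Complex.ofReal) i i = 0 := by simp [niKer]
  have hzero := hA.trace_eq_zero_iff.1 (by simp [Matrix.trace, hdiag])
  rw [niKer, smul_eq_zero_iff_right Complex.I_ne_zero, sub_eq_zero] at hzero
  ext i j
  simpa using (congrFun₂ hzero i j).symm

lemma isHermitian_evalR_zero (hC : MemRHinf C)
    (hker : ∀ ω : ℝ, 0 < ω → (niKer (evalM C (jw ω))).PosSemidef) :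
    (evalR C 0).IsHermitian := by
  apply isHermitian_of_niKer_map_ofReal_posSemidef
  rw [← evalM_zero, niKer_posSemidef_iff]
  intro x
  have hcont : Continuous fun ω : ℝ => (star x ⬝ᵥ evalM C (jw ω) *ᵥ x).im := by
    have hC : Continuous fun ω : ℝ => evalM C (jw ω) :=
      continuous_matrix fun i j => continuous_evalC_jw (memRHinf_iff.1 hC i j)
    exact Complex.continuous_im.comp
      (continuous_const.dotProduct (hC.matrix_mulVec continuous_const))
  have hlim := hcont.continuousWithinAt.tendsto (x := 0) (s := Set.Ioi 0)
  have hle := le_of_tendsto hlim (eventually_mem_nhdsWithin.mono fun ω hω =>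
    niKer_posSemidef_iff.1 (hker ω hω) x)
  simpa [jw] using hle

theorem evalR_zero_lt_of_forall_feedbackStable (hC : MemRHinf C) {γ : ℝ} (hγ : 0 < γ)
    (hherm : (evalR C 0).IsHermitian) (H : ∀ P, IsBoundedSNI γ P → FeedbackStable P C) :
    LoewnerLT (evalR C 0) (γ⁻¹ • 1) := by
  have hdiff : (γ⁻¹ • 1 - evalR C 0).IsHermitian :=
    (isHermitian_one.smul (IsSelfAdjoint.all γ⁻¹)).sub hherm
  rw [LoewnerLT, hdiff.posDef_iff_eigenvalues_pos]
  by_contra! ⟨i, hi⟩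
  set v : Fin n → ℝ := (hdiff.eigenvectorBasis i).ofLp
  set l : ℝ := γ⁻¹ - hdiff.eigenvalues i
  have hγl : γ⁻¹ ≤ l := by simpa [l] using hi
  have hl : 0 < l := (inv_pos.2 hγ).trans_le hγl
  have hCv : evalR C 0 *ᵥ v = l • v := by
    have heig := hdiff.mulVec_eigenvectorBasis i
    rw [sub_mulVec, smul_mulVec, one_mulVec, sub_eq_iff_eq_add,
      ← sub_eq_iff_eq_add', ← sub_smul] at heig
    exact heig.symm
  obtain ⟨P, hP, hP₀⟩ := exists_isBoundedSNI_evalR_zero_eq (n := n) (inv_pos.2 hl)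
    ((inv_le_comm₀ hγ hl).1 hγl)
  have hv := (H P hP).eq_zero_of_evalR_mulVec_eq hP.isSNI.1 hC (v := v)
    (by rw [hP₀, hCv, smul_mulVec, one_mulVec, inv_smul_smul₀ hl.ne'])
  exact hdiff.eigenvectorBasis.orthonormal.ne_zero i (by ext j; exact congrFun hv j)

end Necessity

/-- converse theorem for stable SNI uncertainty with nonnegative
instantaneous gain and bounded static gain. -/
theorem converse_stable_SNI_static_bound {n : ℕ} (C : Matrix (Fin n) (Fin n) (RatFunc ℝ)) (hC : MemRHinf C)
    (γ : ℝ) (hγ : 0 < γ) :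
    (∀ P : Matrix (Fin n) (Fin n) (RatFunc ℝ), IsSNI P → (evalInf P).PosSemidef →
        LoewnerLE (evalR P 0) (γ • 1) → FeedbackStable P C) ↔
      (IsNI C ∧ LoewnerLT (evalR C 0) (γ⁻¹ • 1)) := by
  have hpole {s : ℂ} (hs : 0 ≤ s.re) : ¬ HasPole C s := fun ⟨i, j, h⟩ => hC.2 s hs i j h
  constructor
  · intro H
    have hstable (P) (hP : IsBoundedSNI γ P) : FeedbackStable P C :=
      H P hP.isSNI hP.evalInf_posSemidef hP.evalR_zero_le
    have hker (ω : ℝ) (hω : 0 < ω) := niKer_posSemidef_of_forall_feedbackStable hC hγ hstable hω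
    have hNI : IsNI C := ⟨hC.1, fun s hs => hpole hs.le, fun ω hω _ => hker ω hω,
      fun ω _ h => absurd h (hpole (jw_re ω).ge), fun h => absurd h (hpole le_rfl)⟩
    exact ⟨hNI, evalR_zero_lt_of_forall_feedbackStable hC hγ (isHermitian_evalR_zero hC hker)
      hstable⟩
  · rintro ⟨hNI, hC₀⟩ P hP hPinf hP₀
    have hker (ω : ℝ) (hω : 0 < ω) := hNI.2.2.1 ω hω (hpole (jw_re ω).ge)
    exact IsBoundedSNI.feedbackStable ⟨hP, hPinf, hP₀⟩ hC hγ hker hC₀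

end NIControl
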